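/- arXiv:2402.02312 — 5 statements merged into one kernel-verified Lean document; each statement's English description precedes it below -/
import Mathlib

section
/- Let V be a finite-dimensional vector space over ℚ and let A, B ∈ GL(V) be commuting linear maps each of order a power of the prime p. Then for every m ≥ 1, tr(A · B^(p^(m-1))) ≡ tr(A) (mod p^m), where the traces are rational integers (they are algebraic integers fixed by the Galois action) and the congruence is in ℤ. -/
open Polynomial in
theorem Polynomial.nextCoeff_expand_of_one_lt {R : Type*} [CommSemiring R] {p : ℕ} (hp : 1 < p)
    {f : R[X]} (hf : 0 < f.natDegree) : (expand R p f).nextCoeff = 0 := by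
  have hpos : 0 < f.natDegree * p := Nat.mul_pos hf (by lia)
  rw [nextCoeff_of_natDegree_pos (by rwa [natDegree_expand]), natDegree_expand,
    coeff_expand (by lia), if_neg]
  intro hdvd
  have h1 : p ∣ 1 := by
    have := Nat.dvd_sub (Dvd.intro_left f.natDegree rfl) hdvd
    rwa [show f.natDegree * p - (f.natDegree * p - 1) = 1 by lia] at this
  exact absurd (Nat.dvd_one.mp h1) (by lia)

open Polynomial in
theorem Polynomial.nextCoeff_cyclotomic_prime {R : Type*} [CommRing R] [Nontrivial R] {p : ℕ}
    (hp : p.Prime) : (cyclotomic p R).nextCoeff = 1 := by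
  have := Fact.mk hp
  have hdeg : (cyclotomic p R).natDegree = p - 1 := by
    rw [natDegree_cyclotomic, Nat.totient_prime hp]
  rw [nextCoeff_of_natDegree_pos (by have := hp.two_le; lia), hdeg, cyclotomic_prime]
  have := hp.two_le
  simp only [finsetSum_coeff, coeff_X_pow, Finset.sum_ite_eq, Finset.mem_range]
  rw [if_pos (by lia)]

open Polynomial in
theorem Polynomial.nextCoeff_cyclotomic_prime_pow {R : Type*} [CommRing R] [Nontrivial R] {p : ℕ}
    (hp : p.Prime) (s : ℕ) : (cyclotomic (p ^ (s + 2)) R).nextCoeff = 0 := by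
  rw [show p ^ (s + 2) = p ^ (s + 1) * p from pow_succ _ _,
    ← cyclotomic_expand_eq_cyclotomic hp (dvd_pow_self p s.succ_ne_zero)]
  refine nextCoeff_expand_of_one_lt hp.one_lt ?_
  rw [natDegree_cyclotomic]
  exact Nat.totient_pos.mpr (pow_pos hp.pos _)

theorem IsPrimitiveRoot.minpoly_rat_eq_cyclotomic {K : Type*} [Field K] [Algebra ℚ K]
    {w : K} {n : ℕ} (hn : 0 < n) (hw : IsPrimitiveRoot w n) :
    minpoly ℚ w = Polynomial.cyclotomic n ℚ := by
  have : NeZero (n : ℚ) := ⟨Nat.cast_ne_zero.mpr hn.ne'⟩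
  exact (hw.minpoly_eq_cyclotomic_of_irreducible (Polynomial.cyclotomic.irreducible_rat hn)).symm

section Field

variable {K : Type*} [Field K] [Algebra ℚ K] [FiniteDimensional ℚ K]

open IntermediateField in
theorem IsPrimitiveRoot.finrank_adjoin_rat_mul_totient {w : K} {n : ℕ} (hn : 0 < n)
    (hw : IsPrimitiveRoot w n) : Module.finrank ℚ⟮w⟯ K * n.totient = Module.finrank ℚ K := by
  rw [← Module.finrank_mul_finrank ℚ ℚ⟮w⟯ K, mul_comm,
    adjoin.finrank (IsIntegral.of_finite ℚ w), hw.minpoly_rat_eq_cyclotomic hn,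
    Polynomial.natDegree_cyclotomic]

open IntermediateField in
theorem IsPrimitiveRoot.trace_rat {w : K} {n : ℕ} (hn : 0 < n) (hw : IsPrimitiveRoot w n) :
    Algebra.trace ℚ K w =
      Module.finrank ℚ⟮w⟯ K * -(Polynomial.cyclotomic n ℚ).nextCoeff := by
  rw [trace_eq_finrank_mul_minpoly_nextCoeff, hw.minpoly_rat_eq_cyclotomic hn]

/-- If `[K : ℚ] = e * φ(p ^ (k + 1))`, this computes the trace of any root of unity of `p`-power
order. -/
theorem trace_rat_of_pow_prime_pow_eq_one [DecidableEq K] {p : ℕ} (hp : p.Prime) {e k : ℕ}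
    (he : e * (p ^ (k + 1)).totient = Module.finrank ℚ K) {w : K} {c : ℕ} (hw : w ^ p ^ c = 1) :
    Algebra.trace ℚ K w =
      ((e * ((if w = 1 then p ^ (k + 1) else 0) - if w ^ p = 1 then p ^ k else 0) : ℤ) : ℚ) := by
  obtain ⟨s, -, hs⟩ := (Nat.dvd_prime_pow hp).mp (orderOf_dvd_of_pow_eq_one hw)
  have hprim : IsPrimitiveRoot w (p ^ s) := hs ▸ IsPrimitiveRoot.orderOf w
  rw [Nat.totient_prime_pow_succ hp] at he
  have he' : (e : ℚ) * (p ^ k * (p - 1)) = Module.finrank ℚ K := by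
    rw [← he]; push_cast [Nat.cast_sub hp.one_le]; ring
  match s, hs, hprim with
  | 0, hs, _ =>
    have h1 : w = 1 := by simpa using hs
    subst h1
    have := Algebra.trace_algebraMap (R := ℚ) (S := K) 1
    rw [map_one] at this
    rw [this, if_pos rfl, if_pos (one_pow p), nsmul_one, ← he']
    push_cast
    ring
  | 1, hs, hprim =>
    rw [pow_one] at hs hprim
    have h1 : w ≠ 1 := by
      rintro rfl
      exact hp.one_lt.ne (by simpa using hs)
    have hpw : w ^ p = 1 := hprim.pow_eq_one
    have h2 := hprim.finrank_adjoin_rat_mul_totient hp.pos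
    rw [hprim.trace_rat hp.pos, Polynomial.nextCoeff_cyclotomic_prime hp, if_neg h1, if_pos hpw]
    rw [Nat.totient_prime hp, ← he, ← mul_assoc] at h2
    rw [Nat.eq_of_mul_eq_mul_right (by have := hp.two_le; lia) h2]
    push_cast
    ring
  | s + 2, hs, hprim =>
    have hpw : w ^ p ≠ 1 := fun h => by
      have := Nat.le_of_dvd hp.pos (hs ▸ orderOf_dvd_of_pow_eq_one h)
      exact absurd this (not_le.mpr (lt_self_pow₀ hp.one_lt (by lia)))
    have h1 : w ≠ 1 := by
      rintro rfl
      exact hpw (one_pow p)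
    rw [hprim.trace_rat (pow_pos hp.pos _), Polynomial.nextCoeff_cyclotomic_prime_pow hp,
      if_neg h1, if_neg hpw]
    simp

theorem exists_int_eq_trace_of_pow_eq_one {w : K} {n : ℕ} (hn : 0 < n) (hw : w ^ n = 1) :
    ∃ z : ℤ, Algebra.trace ℚ K w = z := by
  have hint : IsIntegral ℤ w := IsIntegral.of_pow hn (hw ▸ isIntegral_one)
  obtain ⟨z, hz⟩ := IsIntegrallyClosed.isIntegral_iff.mp (Algebra.isIntegral_trace (L := ℚ) hint)
  exact ⟨z, by simpa using hz.symm⟩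

theorem Algebra.trace_rat_mul_pow_congr {p : ℕ} (hp : p.Prime) (n : ℕ) {x y : K} {a b : ℕ}
    (hx : x ^ p ^ a = 1) (hy : y ^ p ^ b = 1) :
    ∃ z₁ z₂ : ℤ, Algebra.trace ℚ K x = z₁ ∧ Algebra.trace ℚ K (x * y ^ p ^ n) = z₂ ∧
      (p : ℤ) ^ (n + 1) ∣ z₂ - z₁ := by
  classical
  by_cases hyn : y ^ p ^ n = 1
  · obtain ⟨z, hz⟩ := exists_int_eq_trace_of_pow_eq_one (pow_pos hp.pos a) hx
    exact ⟨z, z, hz, by rw [hyn, mul_one, hz], by simp⟩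
  obtain ⟨s, -, hs⟩ := (Nat.dvd_prime_pow hp).mp (orderOf_dvd_of_pow_eq_one hy)
  have hns : n < s := by
    by_contra! h
    exact hyn (orderOf_dvd_iff_pow_eq_one.mp (hs ▸ pow_dvd_pow p h))
  obtain ⟨k, rfl⟩ : ∃ k, s = k + 1 := ⟨s - 1, by lia⟩
  have hprim : IsPrimitiveRoot y (p ^ (k + 1)) := hs ▸ IsPrimitiveRoot.orderOf y
  have he := hprim.finrank_adjoin_rat_mul_totient (pow_pos hp.pos _)
  have hxy : (x * y ^ p ^ n) ^ p ^ (a + b) = 1 := by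
    rw [mul_pow, pow_add, pow_mul x, hx, one_pow, one_mul, ← pow_mul,
      show p ^ n * (p ^ a * p ^ b) = p ^ b * (p ^ n * p ^ a) by ring, pow_mul, hy, one_pow]
  refine ⟨_, _, trace_rat_of_pow_prime_pow_eq_one hp he hx,
    trace_rat_of_pow_prime_pow_eq_one hp he hxy, ?_⟩
  rw [← mul_sub]
  refine Dvd.dvd.mul_left ?_ _
  have hdvd : ∀ (P : Prop) [Decidable P] (j : ℕ), n + 1 ≤ j →
      (p : ℤ) ^ (n + 1) ∣ ((if P then p ^ j else 0 : ℕ) : ℤ) := fun P _ j hj => by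
    rw [← Nat.cast_pow, Int.natCast_dvd_natCast]
    split_ifs
    exacts [pow_dvd_pow _ hj, dvd_zero _]
  obtain hk | rfl := (Nat.lt_succ_iff.mp hns).lt_or_eq
  · exact dvd_sub (dvd_sub (hdvd _ _ (hk.trans k.lt_succ_self)) (hdvd _ _ hk))
      (dvd_sub (hdvd _ _ (hk.trans k.lt_succ_self)) (hdvd _ _ hk))
  · have hpow : (x * y ^ p ^ n) ^ p = x ^ p := by
      rw [mul_pow, ← pow_mul, ← pow_succ, hprim.pow_eq_one, mul_one]
    rw [hpow, sub_sub_sub_cancel_right]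
    exact dvd_sub (hdvd _ _ le_rfl) (hdvd _ _ le_rfl)

end Field

theorem LinearMap.trace_eq_of_exact {F U V W : Type*} [Field F] [AddCommGroup U] [Module F U]
    [AddCommGroup V] [Module F V] [AddCommGroup W] [Module F W] [FiniteDimensional F U]
    [FiniteDimensional F V] [FiniteDimensional F W] {i : U →ₗ[F] V} {q : V →ₗ[F] W}
    (hi : Function.Injective i) (hq : Function.Surjective q) (hiq : Function.Exact i q)
    {fU : U →ₗ[F] U} {f : V →ₗ[F] V} {fW : W →ₗ[F] W} (hfi : f ∘ₗ i = i ∘ₗ fU)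
    (hqf : q ∘ₗ f = fW ∘ₗ q) :
    LinearMap.trace F V f = LinearMap.trace F U fU + LinearMap.trace F W fW := by
  obtain ⟨r, hr⟩ := i.exists_leftInverse_of_injective (LinearMap.ker_eq_bot.mpr hi)
  obtain ⟨s, hs⟩ := q.exists_rightInverse_of_surjective (LinearMap.range_eq_top.mpr hq)
  have hr' (u : U) : r (i u) = u := LinearMap.congr_fun hr u
  have hs' (w : W) : q (s w) = w := LinearMap.congr_fun hs w
  have hU : LinearMap.trace F V (f ∘ₗ i ∘ₗ r) = LinearMap.trace F U fU := by
    rw [← LinearMap.comp_assoc, hfi, LinearMap.comp_assoc, LinearMap.trace_comp_comm',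
      LinearMap.comp_assoc, hr, LinearMap.comp_id]
  have hW : LinearMap.trace F V (f ∘ₗ (s - i ∘ₗ r ∘ₗ s) ∘ₗ q) = LinearMap.trace F W fW := by
    have hqi : q ∘ₗ i = 0 := hiq.linearMap_comp_eq_zero
    rw [← LinearMap.comp_assoc, LinearMap.trace_comp_comm', ← LinearMap.comp_assoc, hqf,
      LinearMap.comp_assoc, LinearMap.comp_sub, hs, ← LinearMap.comp_assoc, hqi,
      LinearMap.zero_comp, sub_zero, LinearMap.comp_id]
  rw [← hU, ← hW, ← map_add, ← LinearMap.comp_add]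
  congr 1
  ext v
  obtain ⟨u, hu⟩ := (hiq (v - s (q v))).mp (by rw [map_sub, hs', sub_self])
  have hv : v = i u + s (q v) := by rw [hu, sub_add_cancel]
  have hru : r v = u + r (s (q v)) := by
    conv_lhs => rw [hv, map_add, hr']
  simp only [LinearMap.comp_apply, LinearMap.add_apply, LinearMap.sub_apply, hru, map_add]
  conv_lhs => rw [hv]
  simp only [map_add, map_sub]
  abel

theorem LinearMap.trace_lsmul_eq_algebraTrace {F R K V : Type*} [CommRing F] [CommRing R]
    [Algebra F R] [CommRing K] [Algebra F K] [Algebra R K] [IsScalarTower F R K]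
    [AddCommGroup V] [Module F V] [Module R V] [IsScalarTower F R V] (e : V ≃ₗ[R] K) (r : R) :
    LinearMap.trace F V (Algebra.lsmul F F V r) = Algebra.trace F K (algebraMap R K r) := by
  rw [← LinearMap.trace_conj' _ (e.restrictScalars F), Algebra.trace_apply]
  congr 1
  ext v
  have h : e (r • e.symm v) = algebraMap R K r * v := by
    rw [map_smul, e.apply_symm_apply, Algebra.smul_def]
  exact h

theorem trace_lsmul_mul_pow_congr_of_equiv_field {R K V : Type*} [CommRing R] [Algebra ℚ R]
    [Field K] [Algebra ℚ K] [Algebra R K] [IsScalarTower ℚ R K] [AddCommGroup V] [Module ℚ V]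
    [Module R V] [IsScalarTower ℚ R V] [FiniteDimensional ℚ V] (e : V ≃ₗ[R] K) {p : ℕ}
    (hp : p.Prime) (n : ℕ) {x y : R} {a b : ℕ} (hx : x ^ p ^ a = 1) (hy : y ^ p ^ b = 1) :
    ∃ z₁ z₂ : ℤ, LinearMap.trace ℚ V (Algebra.lsmul ℚ ℚ V x) = z₁ ∧
      LinearMap.trace ℚ V (Algebra.lsmul ℚ ℚ V (x * y ^ p ^ n)) = z₂ ∧
      (p : ℤ) ^ (n + 1) ∣ z₂ - z₁ := by
  have : FiniteDimensional ℚ K := Module.Finite.equiv (e.restrictScalars ℚ)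
  simp only [LinearMap.trace_lsmul_eq_algebraTrace e]
  rw [map_mul, map_pow]
  exact Algebra.trace_rat_mul_pow_congr hp n (by rw [← map_pow, hx, map_one])
    (by rw [← map_pow, hy, map_one])

theorem trace_lsmul_mul_pow_congr {R : Type*} [CommRing R] [Algebra ℚ R] {p : ℕ} (hp : p.Prime)
    (n : ℕ) {x y : R} {a b : ℕ} (hx : x ^ p ^ a = 1) (hy : y ^ p ^ b = 1) (d : ℕ) :
    ∀ (V : Type*) [AddCommGroup V] [Module ℚ V] [Module R V] [IsScalarTower ℚ R V]
      [FiniteDimensional ℚ V], Module.finrank ℚ V = d →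
    ∃ z₁ z₂ : ℤ, LinearMap.trace ℚ V (Algebra.lsmul ℚ ℚ V x) = z₁ ∧
      LinearMap.trace ℚ V (Algebra.lsmul ℚ ℚ V (x * y ^ p ^ n)) = z₂ ∧
      (p : ℤ) ^ (n + 1) ∣ z₂ - z₁ := by
  induction d using Nat.strong_induction_on with
  | _ d ih =>
  intro V _ _ _ _ _ hd
  obtain _ | _ := subsingleton_or_nontrivial V
  · refine ⟨0, 0, ?_, ?_, by simp⟩
    all_goals
      rw [Subsingleton.elim (Algebra.lsmul ℚ ℚ V _) 0, map_zero, Int.cast_zero]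
  by_cases hsimple : IsSimpleModule R V
  · obtain ⟨I, hI, ⟨e⟩⟩ := isSimpleModule_iff_quot_maximal.mp hsimple
    exact @trace_lsmul_mul_pow_congr_of_equiv_field R (R ⧸ I) V _ _ (Ideal.Quotient.field I)
      (Ideal.Quotient.algebra ℚ) (Ideal.Quotient.algebra R) (IsScalarTower.of_algebraMap_eq' rfl)
      _ _ _ _ _ e p hp n x y a b hx hy
  · obtain ⟨N, hN⟩ : ∃ N : Submodule R V, N ≠ ⊥ ∧ N ≠ ⊤ := by
      by_contra! h
      exact hsimple ((isSimpleModule_iff R V).mpr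
        { eq_bot_or_eq_top := fun N => or_iff_not_imp_left.mpr (h N) })
    let i : N →ₗ[ℚ] V := N.subtype.restrictScalars ℚ
    let q : V →ₗ[ℚ] V ⧸ N := N.mkQ.restrictScalars ℚ
    have hi : Function.Injective i := N.subtype_injective
    have hq : Function.Surjective q := N.mkQ_surjective
    have hiq : Function.Exact i q := LinearMap.exact_subtype_mkQ N
    have : FiniteDimensional ℚ N := Module.Finite.of_injective i hi
    have : FiniteDimensional ℚ (V ⧸ N) := Module.Finite.of_surjective q hq
    have htrace (r : R) : LinearMap.trace ℚ V (Algebra.lsmul ℚ ℚ V r) =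
        LinearMap.trace ℚ N (Algebra.lsmul ℚ ℚ N r) +
          LinearMap.trace ℚ (V ⧸ N) (Algebra.lsmul ℚ ℚ (V ⧸ N) r) :=
      LinearMap.trace_eq_of_exact hi hq hiq rfl rfl
    have hfin : Module.finrank ℚ (V ⧸ N) + Module.finrank ℚ N = Module.finrank ℚ V :=
      Submodule.finrank_quotient_add_finrank (N.restrictScalars ℚ)
    have hNpos : 0 < Module.finrank ℚ N :=
      have := Submodule.nontrivial_iff_ne_bot.mpr hN.1
      Module.finrank_pos
    have hQpos : 0 < Module.finrank ℚ (V ⧸ N) :=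
      have := Submodule.Quotient.nontrivial_iff.mpr hN.2
      Module.finrank_pos
    obtain ⟨z₁, z₂, h₁, h₂, h⟩ := ih _ (by lia) N rfl
    obtain ⟨w₁, w₂, k₁, k₂, k⟩ := ih _ (by lia) (V ⧸ N) rfl
    refine ⟨z₁ + w₁, z₂ + w₂, by rw [htrace, h₁, k₁, Int.cast_add],
      by rw [htrace, h₂, k₂, Int.cast_add], ?_⟩
    rw [add_sub_add_comm]
    exact dvd_add h k

open scoped IsMulCommutative in
theorem Commute.trace_mul_pow_congr {V : Type*} [AddCommGroup V] [Module ℚ V]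
    [FiniteDimensional ℚ V] {A B : Module.End ℚ V} (hAB : Commute A B) {p : ℕ} (hp : p.Prime)
    (n : ℕ) {a b : ℕ} (hA : A ^ p ^ a = 1) (hB : B ^ p ^ b = 1) :
    ∃ z₁ z₂ : ℤ, LinearMap.trace ℚ V A = z₁ ∧ LinearMap.trace ℚ V (A * B ^ p ^ n) = z₂ ∧
      (p : ℤ) ^ (n + 1) ∣ z₂ - z₁ := by
  have := Algebra.isMulCommutative_adjoin ℚ (s := {A, B}) (by
    rintro x (rfl | rfl) y (rfl | rfl)
    exacts [rfl, hAB, hAB.symm, rfl])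
  let R := Algebra.adjoin ℚ {A, B}
  let x : R := ⟨A, Algebra.subset_adjoin (by simp)⟩
  let y : R := ⟨B, Algebra.subset_adjoin (by simp)⟩
  exact trace_lsmul_mul_pow_congr (x := x) (y := y) hp n (Subtype.ext hA) (Subtype.ext hB) _ V rfl

/-- Let `V` be a finite-dimensional vector space over `ℚ` and let `A, B`
be commuting invertible linear operators on `V`, each of order a power of the prime `p`.
Then for every `m ≥ 1`, the traces of `A * B ^ (p^(m-1))` and of `A` are rational integers
and `tr (A * B ^ (p^(m-1))) ≡ tr A (mod p^m)` in `ℤ`. -/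
theorem stmt_2 (p : ℕ) (hp : p.Prime) (m : ℕ) (hm : 1 ≤ m)
    (V : Type*) [AddCommGroup V] [Module ℚ V] [FiniteDimensional ℚ V]
    (A B : Module.End ℚ V) (hAB : Commute A B)
    (a b : ℕ) (hA : A ^ p ^ a = 1) (hB : B ^ p ^ b = 1) :
    ∃ z₁ z₂ : ℤ, LinearMap.trace ℚ V A = (z₁ : ℚ) ∧
      LinearMap.trace ℚ V (A * B ^ (p ^ (m - 1))) = (z₂ : ℚ) ∧
      (p : ℤ) ^ m ∣ z₂ - z₁ := by
  obtain ⟨n, rfl⟩ : ∃ n, m = n + 1 := ⟨m - 1, by lia⟩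
  exact hAB.trace_mul_pow_congr hp n hA hB
end

section
/- Let G be a finite group, p a prime, and m ≥ 1. Suppose g, h ∈ G commute and h has order a power of p. Then for every complex character χ of G whose values all lie in ℤ, χ(g) ≡ χ(g · h^(p^(m-1))) (mod p^m). -/
open Polynomial Finset

/-- An endomorphism `B` with `B ^ (N + 1) = B` has integral trace. -/
theorem isIntegral_trace_of_pow_succ_eq_self {V : Type*} [AddCommGroup V] [Module ℂ V]
    [FiniteDimensional ℂ V] (B : Module.End ℂ V) {N : ℕ} (hN : 0 < N) (hB : B ^ (N + 1) = B) :
    IsIntegral ℤ (LinearMap.trace ℂ V B) := by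
  rw [Module.End.trace_eq_sum_roots_charpoly_of_splits (IsAlgClosed.splits _)]
  refine IsIntegral.multiset_sum fun μ hμ => ?_
  have hev : B.HasEigenvalue μ :=
    (Module.End.hasEigenvalue_iff_isRoot_charpoly B μ).2 (isRoot_of_mem_roots hμ)
  obtain ⟨v, hv⟩ := hev.exists_hasEigenvector
  have h1 : μ ^ (N + 1) • v = μ • v := by
    rw [← hv.pow_apply, hB, hv.apply_eq_smul]
  have h2 : μ ^ (N + 1) = μ := smul_left_injective ℂ hv.2 h1
  have hdeg : degree (X : ℤ[X]) < (N + 1 : ℕ) := by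
    rw [degree_X]
    exact_mod_cast (by omega : 1 < N + 1)
  refine ⟨X ^ (N + 1) - X, monic_X_pow_sub hdeg, ?_⟩
  simp [h2]

/-- For commuting `A`, `T` of finite order, the average of the traces of `A * T ^ j`,
which is the trace of `A` on the fixed space of `T`, is integral. -/
theorem isIntegral_average_trace_mul_pow {V : Type*} [AddCommGroup V] [Module ℂ V]
    [FiniteDimensional ℂ V] {A T : Module.End ℂ V} (hAT : Commute A T) {N n : ℕ} (hN : 0 < N)
    (hn : 0 < n) (hA : A ^ N = 1) (hT : T ^ n = 1) :
    IsIntegral ℤ ((n : ℂ)⁻¹ * ∑ j ∈ range n, LinearMap.trace ℂ V (A * T ^ j)) := by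
  set S : Module.End ℂ V := ∑ j ∈ range n, T ^ j with hS
  have hn0 : (n : ℂ) ≠ 0 := by exact_mod_cast hn.ne'
  have hTS : T * S = S := by
    have h := mul_geom_sum T n
    rw [hT, sub_self, sub_mul, one_mul, sub_eq_zero] at h
    exact h
  have hTjS (j : ℕ) : T ^ j * S = S := by
    induction j with
    | zero => simp
    | succ j ih => rw [pow_succ, mul_assoc, hTS, ih]
  have hSS : S * S = (n : ℂ) • S := by
    calc S * S = ∑ j ∈ range n, T ^ j * S := by rw [← sum_mul]
      _ = (n : ℂ) • S := by simp only [hTjS, sum_const, card_range, Nat.cast_smul_eq_nsmul]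
  set E : Module.End ℂ V := (n : ℂ)⁻¹ • S with hE
  have hEE : IsIdempotentElem E := by
    rw [IsIdempotentElem, hE, smul_mul_smul_comm, hSS, smul_smul]
    congr 1
    field_simp
  have hAE : Commute A E :=
    (Commute.sum_right _ _ _ fun j _ => hAT.pow_right j).smul_right _
  have hB : (A * E) ^ (N + 1) = A * E := by
    rw [hAE.mul_pow, hEE.pow_succ_eq, pow_succ, hA, one_mul]
  have := isIntegral_trace_of_pow_succ_eq_self (A * E) hN hB
  rw [hE, mul_smul_comm, map_smul, smul_eq_mul, hS, mul_sum, map_sum] at this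
  exact this

/-- If `n` divides the values of `f` at the primitive `p ^ k`-th roots of unity in the ring of
algebraic integers, then the quotients are the values of a single polynomial in `ℤ[X]`. -/
theorem exists_aeval_eq_of_isIntegral_div {p k n : ℕ} (hp : p.Prime) (hn : n ≠ 0) (f : ℤ[X])
    (h : ∀ β : ℂ, IsPrimitiveRoot β (p ^ k) → IsIntegral ℤ ((n : ℂ)⁻¹ * aeval β f)) :
    ∃ P : ℤ[X], ∀ β : ℂ, IsPrimitiveRoot β (p ^ k) → (n : ℂ)⁻¹ * aeval β f = aeval β P := by
  have : Fact p.Prime := ⟨hp⟩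
  have hpk : 0 < p ^ k := pow_pos hp.pos k
  have : NeZero (p ^ k) := ⟨hpk.ne'⟩
  have hn0 : (n : ℂ) ≠ 0 := by exact_mod_cast hn
  obtain ⟨ζ, hζ⟩ : ∃ ζ : ℂ, IsPrimitiveRoot ζ (p ^ k) :=
    ⟨_, Complex.isPrimitiveRoot_exp _ hpk.ne'⟩
  let K := IntermediateField.adjoin ℚ {ζ}
  let z : K := IntermediateField.AdjoinSimple.gen ℚ ζ
  have hzζ : algebraMap K ℂ z = ζ := IntermediateField.AdjoinSimple.algebraMap_gen ℚ ζ
  have hz : IsPrimitiveRoot z (p ^ k) :=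
    IsPrimitiveRoot.of_map_of_injective (f := algebraMap K ℂ) (by rwa [hzζ])
      (algebraMap K ℂ).injective
  have : IsCyclotomicExtension {p ^ k} ℚ K := by
    change IsCyclotomicExtension {p ^ k} ℚ K.toSubalgebra
    rw [IntermediateField.adjoin_simple_toSubalgebra_of_isAlgebraic
      (hζ.isIntegral hpk).tower_top.isAlgebraic]
    exact hζ.adjoin_isCyclotomicExtension ℚ
  have := IsCyclotomicExtension.Rat.isIntegralClosure_adjoin_singleton_of_prime_pow hz
  have hx : algebraMap K ℂ ((n : K)⁻¹ * aeval z f) = (n : ℂ)⁻¹ * aeval ζ f := by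
    rw [map_mul, map_inv₀, map_natCast, ← aeval_algebraMap_apply, hzζ]
  have hint : IsIntegral ℤ ((n : K)⁻¹ * aeval z f) := by
    rw [← isIntegral_algebraMap_iff (algebraMap K ℂ).injective, hx]
    exact h ζ hζ
  obtain ⟨y, hy⟩ :=
    (IsIntegralClosure.isIntegral_iff (A := Algebra.adjoin ℤ ({z} : Set K))).1 hint
  obtain ⟨P, hP⟩ : (y : K) ∈ (aeval (R := ℤ) z).range :=
    Algebra.adjoin_singleton_eq_range_aeval ℤ z ▸ y.2
  have hPζ : (n : ℂ)⁻¹ * aeval ζ f = aeval ζ P := by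
    rw [← hx, ← hy, ← hzζ, aeval_algebraMap_apply]
    exact congrArg (algebraMap K ℂ) hP.symm
  refine ⟨P, fun β hβ => ?_⟩
  have hdvd : cyclotomic (p ^ k) ℤ ∣ f - (n : ℤ[X]) * P := by
    rw [cyclotomic_eq_minpoly hζ hpk]
    refine minpoly.isIntegrallyClosed_dvd (hζ.isIntegral hpk) ?_
    simp only [map_sub, map_mul, map_natCast, ← hPζ]
    field_simp
    simp
  rw [cyclotomic_eq_minpoly hβ hpk] at hdvd
  obtain ⟨Q, hQ⟩ := hdvd
  have h0 := congrArg (aeval β) hQ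
  simp only [map_sub, map_mul, map_natCast, minpoly.aeval, zero_mul, sub_eq_zero] at h0
  rw [h0]
  field_simp

theorem sum_nthRootsFinset_pow {n : ℕ} (hn : 0 < n) (i : ℕ) :
    ∑ β ∈ nthRootsFinset n (1 : ℂ), β ^ i = if n ∣ i then (n : ℂ) else 0 := by
  have hζ := Complex.isPrimitiveRoot_exp n hn.ne'
  set ζ := Complex.exp (2 * Real.pi * Complex.I / n)
  split_ifs with h
  · rw [sum_congr rfl (g := fun _ => (1 : ℂ)), sum_const, hζ.card_nthRootsFinset]
    · simp
    · intro β hβ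
      obtain ⟨d, rfl⟩ := h
      rw [pow_mul, (mem_nthRootsFinset hn _).1 hβ, one_pow]
  · have hne : ζ ^ i ≠ 1 := fun h1 => h (hζ.dvd_of_pow_eq_one i h1)
    have hζ0 : ζ ≠ 0 := hζ.ne_zero hn.ne'
    have hS : ∑ β ∈ nthRootsFinset n (1 : ℂ), β ^ i
        = ζ ^ i * ∑ β ∈ nthRootsFinset n (1 : ℂ), β ^ i := by
      rw [mul_sum]
      refine sum_nbij' (fun β => ζ⁻¹ * β) (fun β => ζ * β) ?_ ?_ ?_ ?_ ?_
      · intro β hβ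
        rw [mem_nthRootsFinset hn] at hβ ⊢
        rw [mul_pow, inv_pow, hζ.pow_eq_one, hβ, inv_one, one_mul]
      · intro β hβ
        rw [mem_nthRootsFinset hn] at hβ ⊢
        rw [mul_pow, hζ.pow_eq_one, hβ, one_mul]
      · intro β _
        field_simp
      · intro β _
        field_simp
      · intro β _
        rw [← mul_pow]
        field_simp
    have h0 : (1 - ζ ^ i) * ∑ β ∈ nthRootsFinset n (1 : ℂ), β ^ i = 0 := by
      rw [sub_mul, one_mul, ← hS, sub_self]
    exact (mul_eq_zero.1 h0).resolve_left (sub_ne_zero.2 hne.symm)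

theorem sum_nthRootsFinset_prime_pow {p : ℕ} (hp : p.Prime) (c : ℕ) (u : ℂ → ℂ) :
    ∑ β ∈ nthRootsFinset (p ^ c) (1 : ℂ), u β
      = ∑ k ∈ range (c + 1), ∑ β ∈ primitiveRoots (p ^ k) ℂ, u β := by
  classical
  rw [IsPrimitiveRoot.nthRoots_one_eq_biUnion_primitiveRoots, sum_biUnion,
    Nat.sum_divisors_prime_pow hp]
  exact fun a _ b _ hab => IsPrimitiveRoot.disjoint hab

theorem sum_primitiveRoots_prime_pow {p : ℕ} (hp : p.Prime) (k i : ℕ) :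
    ∑ β ∈ primitiveRoots (p ^ (k + 1)) ℂ, β ^ i
      = (if p ^ (k + 1) ∣ i then (p : ℂ) ^ (k + 1) else 0)
        - (if p ^ k ∣ i then (p : ℂ) ^ k else 0) := by
  have h1 := sum_nthRootsFinset_prime_pow hp (k + 1) (· ^ i)
  have h2 := sum_nthRootsFinset_prime_pow hp k (· ^ i)
  rw [sum_range_succ, ← h2, sum_nthRootsFinset_pow (pow_pos hp.pos _),
    sum_nthRootsFinset_pow (pow_pos hp.pos _)] at h1
  push_cast at h1
  rw [h1]
  ring

/-- The sum of `(1 - β ^ p ^ r) * P β` over the primitive `p ^ k`-th roots of unity `β` is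
divisible by `p ^ (r + 1)`. -/
theorem exists_sum_primitiveRoots_one_sub_pow_mul {p : ℕ} (hp : p.Prime) (r k : ℕ) (P : ℤ[X]) :
    ∃ z : ℤ, ∑ β ∈ primitiveRoots (p ^ k) ℂ, (1 - β ^ p ^ r) * aeval β P
      = (p : ℂ) ^ (r + 1) * z := by
  rcases le_or_gt k r with hkr | hkr
  · refine ⟨0, ?_⟩
    rw [Int.cast_zero, mul_zero]
    refine sum_eq_zero fun β hβ => ?_
    have hβ1 := ((mem_primitiveRoots (pow_pos hp.pos k)).1 hβ).pow_eq_one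
    obtain ⟨d, hd⟩ := pow_dvd_pow p hkr
    rw [hd, pow_mul, hβ1, one_pow, sub_self, zero_mul]
  obtain ⟨l, rfl⟩ : ∃ l, k = l + 1 := ⟨k - 1, by omega⟩
  induction P using Polynomial.induction_on' with
  | add P Q hP hQ =>
    obtain ⟨y, hy⟩ := hP
    obtain ⟨z, hz⟩ := hQ
    refine ⟨y + z, ?_⟩
    simp only [map_add, mul_add, sum_add_distrib, hy, hz]
    push_cast
    ring
  | monomial i a =>
    have hsum : ∑ β ∈ primitiveRoots (p ^ (l + 1)) ℂ, (1 - β ^ p ^ r) * aeval β (monomial i a)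
        = a * (∑ β ∈ primitiveRoots (p ^ (l + 1)) ℂ, β ^ i
          - ∑ β ∈ primitiveRoots (p ^ (l + 1)) ℂ, β ^ (i + p ^ r)) := by
      rw [← sum_sub_distrib, mul_sum]
      refine sum_congr rfl fun β _ => ?_
      simp only [aeval_monomial, algebraMap_int_eq, eq_intCast]
      ring
    rw [hsum, sum_primitiveRoots_prime_pow hp, sum_primitiveRoots_prime_pow hp]
    rcases (show r ≤ l by omega).eq_or_lt with rfl | hlt
    · have hiff : p ^ r ∣ i + p ^ r ↔ p ^ r ∣ i := Nat.dvd_add_self_right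
      refine ⟨a * ((if p ^ (r + 1) ∣ i then 1 else 0)
        - (if p ^ (r + 1) ∣ i + p ^ r then 1 else 0)), ?_⟩
      simp only [hiff]
      push_cast
      split_ifs <;> ring
    · obtain ⟨d, rfl⟩ : ∃ d, l = r + 1 + d := ⟨l - (r + 1), by omega⟩
      refine ⟨a * p ^ d * ((if p ^ (r + 1 + d + 1) ∣ i then (p : ℤ) else 0)
        - (if p ^ (r + 1 + d) ∣ i then 1 else 0)
        - ((if p ^ (r + 1 + d + 1) ∣ i + p ^ r then (p : ℤ) else 0)
        - (if p ^ (r + 1 + d) ∣ i + p ^ r then 1 else 0))), ?_⟩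
      push_cast
      split_ifs <;> ring

theorem inversion_nthRootsFinset {n i : ℕ} (hi : i < n) (F : ℕ → ℤ) :
    ∑ β ∈ nthRootsFinset n (1 : ℂ),
      β ^ i * ((n : ℂ)⁻¹ * aeval β (∑ j ∈ range n, C (F j) * X ^ ((n - 1) * j))) = F i := by
  have hn : 0 < n := by omega
  have hn0 : (n : ℂ) ≠ 0 := by exact_mod_cast hn.ne'
  have hdvd (j : ℕ) (hj : j ∈ range n) : n ∣ i + (n - 1) * j ↔ j = i := by
    rw [mem_range] at hj
    have h1 : ((i + (n - 1) * j : ℕ) : ℤ) = (i - j) + n * j := by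
      push_cast [Nat.cast_sub (show 1 ≤ n from hn)]
      ring
    rw [← Int.natCast_dvd_natCast, h1, dvd_add_left (dvd_mul_right _ _)]
    constructor
    · intro h
      have := Int.eq_zero_of_abs_lt_dvd h (by rw [abs_lt]; constructor <;> omega)
      omega
    · rintro rfl
      simp
  calc _ = ∑ β ∈ nthRootsFinset n (1 : ℂ), ∑ j ∈ range n,
        (n : ℂ)⁻¹ * F j * β ^ (i + (n - 1) * j) := by
        refine sum_congr rfl fun β _ => ?_
        rw [map_sum, mul_sum, mul_sum]
        refine sum_congr rfl fun j _ => ?_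
        simp only [map_mul, eq_intCast, map_intCast, map_pow, aeval_X]
        ring
    _ = ∑ j ∈ range n, (n : ℂ)⁻¹ * F j * (if j = i then (n : ℂ) else 0) := by
        rw [sum_comm]
        refine sum_congr rfl fun j hj => ?_
        rw [← mul_sum, sum_nthRootsFinset_pow hn]
        simp only [hdvd j hj]
    _ = F i := by
        simp only [mul_ite, mul_zero]
        rw [sum_ite_eq', if_pos (mem_range.2 hi)]
        field_simp

/-- If all Fourier coefficients of an integer-valued function `F` on `ℤ / p ^ c` are integral,
then `F 0 ≡ F (p ^ r)` modulo `p ^ (r + 1)`. -/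
theorem exists_sub_eq_of_isIntegral_fourier {p : ℕ} (hp : p.Prime) {r c : ℕ} (hr : r < c)
    (F : ℕ → ℤ)
    (hF : ∀ β : ℂ, β ^ p ^ c = 1 → IsIntegral ℤ (((p ^ c : ℕ) : ℂ)⁻¹ *
      aeval β (∑ j ∈ range (p ^ c), C (F j) * X ^ ((p ^ c - 1) * j)))) :
    ∃ z : ℤ, (F 0 : ℂ) - F (p ^ r) = (p : ℂ) ^ (r + 1) * z := by
  set f : ℤ[X] := ∑ j ∈ range (p ^ c), C (F j) * X ^ ((p ^ c - 1) * j) with hf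
  have hkey (k : ℕ) (hk : k ∈ range (c + 1)) : ∃ z : ℤ, ∑ β ∈ primitiveRoots (p ^ k) ℂ,
      (1 - β ^ p ^ r) * (((p ^ c : ℕ) : ℂ)⁻¹ * aeval β f) = (p : ℂ) ^ (r + 1) * z := by
    obtain ⟨P, hP⟩ := exists_aeval_eq_of_isIntegral_div (k := k) hp (pow_pos hp.pos c).ne' f
      (fun β hβ => hF β (by
        obtain ⟨d, hd⟩ := pow_dvd_pow p (Nat.lt_succ_iff.1 (mem_range.1 hk))
        rw [hd, pow_mul, hβ.pow_eq_one, one_pow]))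
    obtain ⟨z, hz⟩ := exists_sum_primitiveRoots_one_sub_pow_mul hp r k P
    refine ⟨z, ?_⟩
    rw [← hz]
    refine sum_congr rfl fun β hβ => ?_
    rw [hP β ((mem_primitiveRoots (pow_pos hp.pos k)).1 hβ)]
  choose! z hz using hkey
  refine ⟨∑ k ∈ range (c + 1), z k, ?_⟩
  rw [← inversion_nthRootsFinset (pow_pos hp.pos c) F,
    ← inversion_nthRootsFinset (Nat.pow_lt_pow_right hp.one_lt hr) F, ← sum_sub_distrib,
    sum_nthRootsFinset_prime_pow hp, Int.cast_sum, mul_sum]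
  refine sum_congr rfl fun k hk => ?_
  rw [← hz k hk]
  refine sum_congr rfl fun β _ => ?_
  rw [← hf]
  ring


/-- Let `G` be a finite group, `p` a prime, `m ≥ 1`.  Suppose `g, h ∈ G`
commute and `h` has order a power of `p`.  Then for every complex character `χ` of `G`
all of whose values are rational integers, `χ g ≡ χ (g * h ^ (p^(m-1))) (mod p^m)`. -/
theorem stmt_3 (p m : ℕ) (hp : p.Prime) (hm : 1 ≤ m)
    (G : Type) [Group G] [Fintype G] (g h : G) (hgh : Commute g h)
    (c : ℕ) (hord : orderOf h = p ^ c)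
    (V : FDRep ℂ G) (hint : ∀ x : G, ∃ z : ℤ, V.character x = (z : ℂ)) :
    ∃ z : ℤ, V.character g - V.character (g * h ^ (p ^ (m - 1))) = ((p : ℂ)) ^ m * (z : ℂ) := by
  obtain ⟨r, rfl⟩ : ∃ r, m = r + 1 := ⟨m - 1, by omega⟩
  rw [Nat.add_sub_cancel]
  have hh : h ^ p ^ c = 1 := hord ▸ pow_orderOf_eq_one h
  rcases le_or_gt c r with hcr | hrc
  · obtain ⟨d, hd⟩ := pow_dvd_pow p hcr
    exact ⟨0, by rw [hd, pow_mul, hh, one_pow, mul_one, sub_self, Int.cast_zero, mul_zero]⟩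
  choose χ hχ using hint
  have hpc : 0 < p ^ c := pow_pos hp.pos c
  obtain ⟨z, hz⟩ := exists_sub_eq_of_isIntegral_fourier hp hrc (fun j => χ (g * h ^ j)) (by
    intro β hβ
    set γ : ℂ := β ^ (p ^ c - 1) with hγ
    have hcomm : Commute (V.ρ g) (γ • V.ρ h) := (hgh.map V.ρ).smul_right γ
    have hA : V.ρ g ^ Fintype.card G = 1 := by rw [← map_pow, pow_card_eq_one, map_one]
    have hT : (γ • V.ρ h) ^ p ^ c = 1 := by
      rw [_root_.smul_pow, ← map_pow, hh, map_one, hγ, ← pow_mul, mul_comm, pow_mul, hβ, one_pow,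
        one_smul]
    have hI := isIntegral_average_trace_mul_pow hcomm Fintype.card_pos hpc hA hT
    convert hI using 2
    rw [map_sum]
    refine sum_congr rfl fun j _ => ?_
    rw [_root_.smul_pow, mul_smul_comm, map_smul, ← map_pow, ← map_mul, smul_eq_mul]
    simp only [map_mul, eq_intCast, map_intCast, map_pow, aeval_X]
    rw [← hχ, hγ, ← pow_mul, mul_comm, FDRep.character, map_mul, map_pow])
  refine ⟨z, ?_⟩
  rw [← hz, hχ, hχ]
  simp
end

section
/- Let σ ∈ S_n be a permutation whose cycle type contains p^m parts of size k, and let σ' have the cycle type obtained by replacing those p^m parts of size k with p^(m-1) parts of size pk. Then χ(σ) ≡ χ(σ') (mod p^m) for every (complex, necessarily integer-valued) character χ of S_n. -/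
open Equiv

/-- The full cycle type of a permutation of `Fin n`: the cycle lengths including
fixed points as cycles of length 1. -/
def fullCycleType {n : ℕ} (σ : Equiv.Perm (Fin n)) : Multiset ℕ :=
  σ.cycleType + Multiset.replicate (n - σ.cycleType.sum) 1

open ZMod in
lemma invDFT_unit_mul {N : ℕ} [NeZero N] {f : ZMod N → ℂ}
    (hf : ∀ (u : (ZMod N)ˣ) a, f (u * a) = f a) (u : (ZMod N)ˣ) (x : ZMod N) :
    𝓕⁻ f (u * x) = 𝓕⁻ f x := by
  have h := dft_comp_unitMul f u⁻¹ (-x)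
  rw [show (fun j ↦ f ((u⁻¹).val * j)) = f from funext (hf u⁻¹), inv_inv] at h
  rw [invDFT_apply', invDFT_apply', h, mul_neg]

lemma natCast_dvd_natCast_iff_of_dvd {N i d : ℕ} (hi : i ∣ N) :
    (i : ZMod N) ∣ (d : ZMod N) ↔ i ∣ d := by
  refine ⟨fun h ↦ ?_, fun h ↦ by exact_mod_cast map_dvd (Nat.castRingHom (ZMod N)) h⟩
  have h' := map_dvd (ZMod.castHom hi (ZMod i)) h
  rw [map_natCast, map_natCast, ZMod.natCast_self, zero_dvd_iff] at h'
  exact (ZMod.natCast_eq_zero_iff d i).1 h'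

lemma sum_multiples_eq_sum_range {N : ℕ} [NeZero N] {i l : ℕ} (hN : N = i * l) (g : ZMod N → ℂ) :
    ∑ x : ZMod N, (if (i : ZMod N) ∣ x then g x else 0) =
      ∑ j ∈ Finset.range l, g ((i * j : ℕ) : ZMod N) := by
  have hi : 0 < i := Nat.pos_of_ne_zero fun h ↦ NeZero.ne N (by simp [hN, h])
  rw [← Finset.sum_filter]
  symm
  refine Finset.sum_bij (fun j _ ↦ ((i * j : ℕ) : ZMod N)) ?_ ?_ ?_ fun _ _ ↦ rfl
  · intro j _
    simp
  · intro a ha b hb hab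
    rw [ZMod.natCast_eq_natCast_iff', Nat.mod_eq_of_lt, Nat.mod_eq_of_lt] at hab
    · exact Nat.eq_of_mul_eq_mul_left hi hab
    · rw [hN]; exact Nat.mul_lt_mul_of_pos_left (Finset.mem_range.1 hb) hi
    · rw [hN]; exact Nat.mul_lt_mul_of_pos_left (Finset.mem_range.1 ha) hi
  · intro x hx
    rw [Finset.mem_filter, ← ZMod.natCast_zmod_val x,
      natCast_dvd_natCast_iff_of_dvd ⟨l, hN⟩] at hx
    obtain ⟨j, hj⟩ := hx.2
    refine ⟨j, ?_, by rw [← hj, ZMod.natCast_zmod_val]⟩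
    have := ZMod.val_lt x
    rw [hj, hN] at this
    exact Finset.mem_range.2 (Nat.lt_of_mul_lt_mul_left this)

open ZMod in
lemma sum_stdAddChar_multiples {N : ℕ} [NeZero N] {i l : ℕ} (hN : N = i * l) (a : ℕ) :
    ∑ x : ZMod N, (if (i : ZMod N) ∣ x then stdAddChar (-(x * (a : ZMod N))) else 0 : ℂ) =
      if l ∣ a then (l : ℂ) else 0 := by
  have hi : 0 < i := Nat.pos_of_ne_zero fun h ↦ NeZero.ne N (by simp [hN, h])
  rw [sum_multiples_eq_sum_range hN fun x ↦ (stdAddChar (-(x * (a : ZMod N))) : ℂ)]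
  set r : ℂ := stdAddChar (-((i : ZMod N) * (a : ZMod N)))
  have hr (j : ℕ) : (stdAddChar (-(((i * j : ℕ) : ZMod N) * (a : ZMod N))) : ℂ) = r ^ j := by
    rw [← AddChar.map_nsmul_eq_pow]
    congr 1
    push_cast
    rw [nsmul_eq_mul]
    ring
  have hr1 : r = 1 ↔ l ∣ a := by
    rw [← Nat.mul_dvd_mul_iff_left hi, ← hN, ← ZMod.natCast_eq_zero_iff,
      ← AddChar.map_zero_eq_one (stdAddChar (N := N)), injective_stdAddChar.eq_iff,
      neg_eq_zero, Nat.cast_mul]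
  simp_rw [hr]
  split_ifs with h
  · simp [hr1.2 h]
  · have hl : r ^ l = 1 := by
      rw [← hr, ← hN]
      simp
    have := mul_neg_geom_sum r l
    rw [hl, sub_self, mul_eq_zero, sub_eq_zero] at this
    exact this.resolve_left fun h' ↦ h (hr1.1 h'.symm)

open ZMod in
/-- A function on `ZMod N` that is invariant under multiplication by units is a combination of the
functions `a ↦ l * [l ∣ a]`, with coefficients in the additive group generated by its Fourier
coefficients. -/
lemma exists_eq_sum_divisors_of_unit_invariant {N : ℕ} [NeZero N] (S : AddSubgroup ℂ)
    {f : ZMod N → ℂ} (hf : ∀ (u : (ZMod N)ˣ) a, f (u * a) = f a) (hS : ∀ x, 𝓕⁻ f x ∈ S) :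
    ∃ B : ℕ → ℂ, (∀ l, B l ∈ S) ∧
      ∀ a : ℕ, f a = ∑ l ∈ N.divisors, if l ∣ a then (l : ℂ) * B l else 0 := by
  let C : ℕ → ℂ := fun e ↦ 𝓕⁻ f (e : ZMod N)
  let B : ℕ → ℂ := fun e ↦ ∑ x ∈ e.divisorsAntidiagonal, ArithmeticFunction.moebius x.1 • C x.2
  have hB : ∀ e > 0, ∑ i ∈ e.divisors, B i = C e :=
    ArithmeticFunction.sum_eq_iff_sum_smul_moebius_eq.2 fun _ _ ↦ rfl
  have hBS (e : ℕ) : B e ∈ S := S.sum_mem fun x _ ↦ S.zsmul_mem (hS _) _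
  have hN0 : N ≠ 0 := NeZero.ne N
  have hc (x : ZMod N) : 𝓕⁻ f x = ∑ i ∈ N.divisors, if (i : ZMod N) ∣ x then B i else 0 := by
    obtain ⟨d, hd, u, hu, rfl⟩ := x.eq_unit_mul_divisor
    obtain ⟨u, rfl⟩ := hu
    rw [invDFT_unit_mul hf, ← Finset.sum_filter]
    change C d = _
    rw [← hB d (Nat.pos_of_dvd_of_pos hd (Nat.pos_of_ne_zero hN0))]
    refine Finset.sum_congr ?_ fun _ _ ↦ rfl
    ext i
    have hd0 : d ≠ 0 := fun h ↦ hN0 (by rwa [h, zero_dvd_iff] at hd)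
    simp only [Nat.mem_divisors, Finset.mem_filter, Units.dvd_mul_left]
    constructor
    · rintro ⟨h, -⟩
      exact ⟨⟨h.trans hd, hN0⟩, (natCast_dvd_natCast_iff_of_dvd (h.trans hd)).2 h⟩
    · rintro ⟨⟨h, -⟩, h'⟩
      exact ⟨(natCast_dvd_natCast_iff_of_dvd h).1 h', hd0⟩
  refine ⟨fun l ↦ B (N / l), fun l ↦ hBS _, fun a ↦ ?_⟩
  have key : f a = ∑ i ∈ N.divisors, if N / i ∣ a then ((N / i : ℕ) : ℂ) * B i else 0 := by
    conv_lhs => rw [← LinearEquiv.apply_symm_apply dft f, dft_apply]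
    simp_rw [hc, Finset.smul_sum]
    rw [Finset.sum_comm]
    refine Finset.sum_congr rfl fun i hi ↦ ?_
    have h := sum_stdAddChar_multiples
      (Nat.mul_div_cancel' (Nat.dvd_of_mem_divisors hi)).symm a
    rw [← ite_zero_mul, ← h, Finset.sum_mul]
    refine Finset.sum_congr rfl fun x _ ↦ ?_
    simp
  rw [key, ← Nat.sum_div_divisors]
  refine Finset.sum_congr rfl fun i hi ↦ ?_
  rw [Nat.div_div_self (Nat.dvd_of_mem_divisors hi) hN0]

open ZMod in
lemma isIdempotentElem_invDFT {N : ℕ} [NeZero N] {A : Type*} [Ring A] [Algebra ℂ A]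
    {R : ZMod N → A} (hR : ∀ a b, R (a + b) = R a * R b) (x : ZMod N) :
    IsIdempotentElem (𝓕⁻ R x) := by
  have hN : (N : ℂ) ≠ 0 := NeZero.ne _
  have h (a : ZMod N) : R a * ∑ j : ZMod N, (stdAddChar (j * x) : ℂ) • R j =
      (stdAddChar (-(a * x)) : ℂ) • ∑ j : ZMod N, (stdAddChar (j * x) : ℂ) • R j := by
    rw [Finset.mul_sum, Finset.smul_sum]
    refine Fintype.sum_equiv (Equiv.addLeft a) _ _ fun j ↦ ?_
    rw [Equiv.coe_addLeft, hR, smul_smul, ← AddChar.map_add_eq_mul, mul_smul_comm]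
    congr 2
    ring
  rw [IsIdempotentElem, invDFT_apply, smul_mul_smul_comm, Finset.sum_mul]
  simp_rw [smul_mul_assoc, h, smul_smul, ← AddChar.map_add_eq_mul, add_neg_cancel]
  rw [AddChar.map_zero_eq_one, one_smul, Finset.sum_const, Finset.card_univ, ZMod.card,
    ← Nat.cast_smul_eq_nsmul ℂ, smul_smul]
  congr 1
  field_simp

lemma trace_isIdempotentElem_mem_int {V : Type*} [AddCommGroup V] [Module ℂ V]
    [FiniteDimensional ℂ V] {e : Module.End ℂ V} (he : IsIdempotentElem e) :
    ∃ z : ℤ, LinearMap.trace ℂ V e = z := by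
  have := (LinearMap.IsIdempotentElem.isProj_range e he).trace
  exact ⟨_, by rw [this]; exact (Int.cast_natCast _).symm⟩

lemma isIntegral_trace_mul_of_isIdempotentElem {V : Type*} [AddCommGroup V] [Module ℂ V]
    [FiniteDimensional ℂ V] {T e : Module.End ℂ V} (he : IsIdempotentElem e) (h : Commute T e)
    {r : ℕ} (hr : r ≠ 0) (hT : T ^ r = 1) :
    IsIntegral ℤ (LinearMap.trace ℂ V (T * e)) := by
  have hpow : (T * e) ^ (r + 1) = T * e := by
    rw [h.mul_pow, he.pow_succ_eq, pow_succ, hT, one_mul]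
  rw [Module.End.trace_eq_sum_roots_charpoly_of_splits (IsAlgClosed.splits _)]
  refine IsIntegral.multiset_sum fun μ hμ ↦ ?_
  have hev : Module.End.HasEigenvalue (T * e) μ :=
    (Module.End.hasEigenvalue_iff_isRoot_charpoly _ _).2 (Polynomial.isRoot_of_mem_roots hμ)
  obtain ⟨v, hv⟩ := hev.exists_hasEigenvector
  have h1 := hv.pow_apply (r + 1)
  rw [hpow, hv.apply_eq_smul] at h1
  have h2 : μ = μ ^ (r + 1) := smul_left_injective ℂ hv.2 h1
  refine ⟨Polynomial.X ^ (r + 1) - Polynomial.X, Polynomial.monic_X_pow_sub (by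
    rw [Polynomial.degree_X]; exact_mod_cast Nat.lt_succ_of_le (Nat.pos_of_ne_zero hr)), ?_⟩
  simp [← h2]

open ZMod in
lemma invDFT_trace_mul {N : ℕ} [NeZero N] {V : Type*} [AddCommGroup V] [Module ℂ V]
    (T : Module.End ℂ V) (R : ZMod N → Module.End ℂ V) (x : ZMod N) :
    𝓕⁻ (fun a ↦ LinearMap.trace ℂ V (T * R a)) x = LinearMap.trace ℂ V (T * 𝓕⁻ R x) := by
  simp [invDFT_apply, Finset.mul_sum]

lemma Equiv.Perm.IsCycle.pow_of_coprime {α : Type*} [Fintype α] [DecidableEq α] {σ : Perm α}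
    (hσ : σ.IsCycle) {u : ℕ} (hu : u.Coprime (orderOf σ)) : (σ ^ u).IsCycle := by
  obtain ⟨m, hm⟩ := exists_pow_eq_self_of_coprime hu
  refine Equiv.Perm.IsCycle.of_pow (n := m) (by rwa [hm]) ?_
  rw [hm]
  exact Equiv.Perm.support_pow_le σ u

lemma Equiv.Perm.cycleType_pow_of_coprime {α : Type*} [Fintype α] [DecidableEq α] (σ : Perm α)
    {u : ℕ} (hu : u.Coprime (orderOf σ)) : (σ ^ u).cycleType = σ.cycleType := by
  induction σ using Equiv.Perm.cycle_induction_on with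
  | base_one => simp
  | base_cycles σ hσ =>
    rw [(hσ.pow_of_coprime hu).cycleType, hσ.cycleType, Equiv.Perm.support_pow_coprime hu]
  | induction_disjoint σ τ hd hσ ih₁ ih₂ =>
    rw [hd.orderOf] at hu
    rw [hd.commute.mul_pow, (hd.pow_disjoint_pow u u).cycleType_mul, hd.cycleType_mul,
      ih₁ (hu.coprime_dvd_right (Nat.dvd_lcm_left _ _)),
      ih₂ (hu.coprime_dvd_right (Nat.dvd_lcm_right _ _))]

lemma Equiv.Perm.cycleType_eq_replicate_of_semiregular {α : Type*} [Fintype α] [DecidableEq α]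
    {σ : Perm α} (h1 : σ ≠ 1) (hσ : ∀ (j : ℕ) (x : α), (σ ^ j) x = x → σ ^ j = 1) :
    σ.cycleType = Multiset.replicate (Fintype.card α / orderOf σ) (orderOf σ) := by
  have hmem : ∀ l ∈ σ.cycleType, l = orderOf σ := by
    intro l hl
    rw [Equiv.Perm.cycleType_def, Multiset.mem_map] at hl
    obtain ⟨c, hc, rfl⟩ := hl
    have hc' : c ∈ σ.cycleFactorsFinset := hc
    have hcyc := (Equiv.Perm.mem_cycleFactorsFinset_iff.1 hc').1
    obtain ⟨x, hx⟩ := hcyc.nonempty_support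
    rw [Function.comp_apply, ← hcyc.orderOf]
    refine Nat.dvd_antisymm ?_ ?_
    · rw [hcyc.orderOf]
      exact Equiv.Perm.dvd_of_mem_cycleType (Multiset.mem_map.2 ⟨c, hc, rfl⟩)
    · refine orderOf_dvd_of_pow_eq_one (hσ _ x ?_)
      have hcx := Equiv.Perm.cycle_is_cycleOf hx hc'
      rw [← Equiv.Perm.cycleOf_pow_apply_self, ← hcx, pow_orderOf_eq_one, Equiv.Perm.one_apply]
  have hrep := Multiset.eq_replicate_card.2 hmem
  have hsum := σ.sum_cycleType
  have hsupp : σ.support = Finset.univ := by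
    ext x
    simp only [Equiv.Perm.mem_support, Finset.mem_univ, iff_true]
    exact fun h ↦ h1 (by simpa using hσ 1 x (by simpa using h))
  rw [hsupp, Finset.card_univ, hrep, Multiset.sum_replicate, smul_eq_mul] at hsum
  rw [← hsum, Nat.mul_div_cancel _ (orderOf_pos σ)]
  exact hrep

lemma addLeft_pow_eq {A : Type*} [AddGroup A] (a : A) (j : ℕ) :
    (Equiv.addLeft a) ^ j = Equiv.addLeft (j • a) := by
  simp

lemma cycleType_addLeft_natCast {N : ℕ} [NeZero N] {a l : ℕ} (hN : N = a * l) :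
    (Equiv.addLeft (a : ZMod N)).cycleType = (Multiset.replicate a l).filter (1 < ·) := by
  have ha : a ≠ 0 := fun h ↦ NeZero.ne N (by simp [hN, h])
  have hl : l ≠ 0 := fun h ↦ NeZero.ne N (by simp [hN, h])
  have hord (j : ℕ) : Equiv.addLeft (a : ZMod N) ^ j = 1 ↔ l ∣ j := by
    rw [← Nat.mul_dvd_mul_iff_left (Nat.pos_of_ne_zero ha), ← hN, ← ZMod.natCast_eq_zero_iff,
      addLeft_pow_eq, nsmul_eq_mul, Nat.cast_mul, mul_comm (a : ZMod N)]
    constructor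
    · intro h
      simpa using congrArg (fun g : Perm (ZMod N) ↦ g 0) h
    · intro h
      ext1 x
      simp [h]
  have horder : orderOf (Equiv.addLeft (a : ZMod N)) = l :=
    Nat.dvd_antisymm (orderOf_dvd_of_pow_eq_one ((hord l).2 dvd_rfl))
      ((hord _).1 (pow_orderOf_eq_one _))
  rcases eq_or_ne l 1 with rfl | hl1
  · rw [Multiset.filter_eq_nil.2 (fun b hb ↦ by simp [Multiset.eq_of_mem_replicate hb]),
      Equiv.Perm.cycleType_eq_zero, ← orderOf_eq_one_iff, horder]
  · rw [Equiv.Perm.cycleType_eq_replicate_of_semiregular, horder, ZMod.card,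
      Multiset.filter_eq_self.2 (fun b hb ↦ by rw [Multiset.eq_of_mem_replicate hb]; omega)]
    · congr 1
      rw [hN, Nat.mul_div_cancel _ (Nat.pos_of_ne_zero hl)]
    · exact fun h ↦ hl1 (by rw [← horder, h, orderOf_one])
    · intro j x hx
      rw [addLeft_pow_eq] at hx ⊢
      have h0 : j • (a : ZMod N) = 0 := by simpa using hx
      rw [h0]
      ext1 x
      simp

lemma Equiv.Perm.disjoint_extendDomain {α β γ : Type*} {q : γ → Prop} [DecidablePred q]
    (e : α ≃ Subtype q) (e' : β ≃ {x // ¬ q x}) (σ : Perm α) (τ : Perm β) :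
    (σ.extendDomain e).Disjoint (τ.extendDomain e') := by
  intro x
  by_cases hx : q x
  · exact Or.inr (Equiv.Perm.extendDomain_apply_not_subtype _ _ (not_not.2 hx))
  · exact Or.inl (Equiv.Perm.extendDomain_apply_not_subtype _ _ hx)

lemma cycleType_eq_filter_fullCycleType {n : ℕ} (σ : Perm (Fin n)) :
    σ.cycleType = (fullCycleType σ).filter (1 < ·) := by
  rw [fullCycleType, Multiset.filter_add, Multiset.filter_eq_self.2,
    Multiset.filter_eq_nil.2, add_zero]
  · intro b hb
    simp [Multiset.eq_of_mem_replicate hb]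
  · exact fun _ ↦ Equiv.Perm.one_lt_of_mem_cycleType

lemma sum_fullCycleType {n : ℕ} (σ : Perm (Fin n)) : (fullCycleType σ).sum = n := by
  have := σ.sum_cycleType_le
  rw [Fintype.card_fin] at this
  simp [fullCycleType]
  omega

lemma FDRep.character_eq_of_isConj {G : Type} [Group G] (V : FDRep ℂ G) {g h : G}
    (hgh : IsConj g h) : V.character g = V.character h := by
  obtain ⟨c, rfl⟩ := isConj_iff.1 hgh
  exact (V.char_conj g c).symm

/-- Characters of symmetric groups are integer-valued. -/
lemma exists_int_character_eq {α : Type} [Fintype α] [DecidableEq α] (V : FDRep ℂ (Perm α))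
    (h : Perm α) : ∃ z : ℤ, V.character h = z := by
  have hN0 : orderOf h ≠ 0 := (orderOf_pos h).ne'
  have : NeZero (orderOf h) := ⟨hN0⟩
  let R : ZMod (orderOf h) → Module.End ℂ V := fun a ↦ V.ρ (h ^ a.val)
  have hR (a b) : R (a + b) = R a * R b := by
    simp only [R]
    rw [← map_mul, ← pow_add, ZMod.val_add, pow_mod_orderOf]
  let f : ZMod (orderOf h) → ℂ := fun a ↦ LinearMap.trace ℂ V (1 * R a)
  have hf (a : ZMod (orderOf h)) : f a = V.character (h ^ a.val) := by
    simp [f, R, FDRep.character]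
  have hfu (u : (ZMod (orderOf h))ˣ) (a) : f (u * a) = f a := by
    rw [hf, hf]
    refine FDRep.character_eq_of_isConj V (Equiv.Perm.isConj_iff_cycleType_eq.2 ?_)
    rw [ZMod.val_mul, pow_mod_orderOf, mul_comm, pow_mul]
    exact Equiv.Perm.cycleType_pow_of_coprime _
      ((ZMod.val_coe_unit_coprime u).coprime_dvd_right (orderOf_pow_dvd _))
  obtain ⟨B, hB, hfB⟩ := exists_eq_sum_divisors_of_unit_invariant
    (Int.castAddHom ℂ).range hfu fun x ↦ by
      rw [invDFT_trace_mul, one_mul]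
      obtain ⟨z, hz⟩ := trace_isIdempotentElem_mem_int (isIdempotentElem_invDFT hR x)
      exact ⟨z, hz.symm⟩
  have h1 := hfB 1
  rw [hf, ZMod.val_natCast, pow_mod_orderOf, pow_one,
    Finset.sum_eq_single_of_mem 1 (by simp [hN0]) (fun l _ hl ↦ by simp [hl])] at h1
  obtain ⟨z, hz⟩ := hB 1
  refine ⟨z, ?_⟩
  rw [h1]
  simpa using hz.symm

lemma isIntegral_character_sub_div {N p m : ℕ} [NeZero N] (hp : p.Prime) (hm : 1 ≤ m)
    (hN : p ^ m ∣ N) {G : Type} [Group G] [Finite G] (V : FDRep ℂ G) (X : ZMod N → G)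
    (hX : ∀ a b, X (a + b) = X a * X b) (τ : G) (hτ : ∀ a, Commute τ (X a))
    (hconj : ∀ (u : (ZMod N)ˣ) a, IsConj (X (u * a) * τ) (X a * τ)) :
    ∃ w : ℂ, IsIntegral ℤ w ∧ V.character (X (p ^ m : ℕ) * τ) -
      V.character (X (p ^ (m - 1) : ℕ) * τ) = (p : ℂ) ^ m * w := by
  let R : ZMod N → Module.End ℂ V := fun a ↦ V.ρ (X a)
  have hR (a b) : R (a + b) = R a * R b := by simp only [R]; rw [← map_mul, hX]
  let f : ZMod N → ℂ := fun a ↦ LinearMap.trace ℂ V (V.ρ τ * R a)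
  have hf (a : ZMod N) : f a = V.character (X a * τ) := by
    rw [← (hτ a).eq]
    simp [f, R, FDRep.character]
  have hcomm (x : ZMod N) : Commute (V.ρ τ) (ZMod.dft.symm R x) := by
    rw [ZMod.invDFT_apply]
    exact (Commute.sum_right _ _ _ fun a _ ↦ ((hτ a).map V.ρ).smul_right _).smul_right _
  obtain ⟨B, hB, hfB⟩ := exists_eq_sum_divisors_of_unit_invariant
    (integralClosure ℤ ℂ).toSubring.toAddSubgroup
    (f := f) (fun u a ↦ by rw [hf, hf]; exact V.character_eq_of_isConj (hconj u a)) fun x ↦ by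
      rw [invDFT_trace_mul]
      exact isIntegral_trace_mul_of_isIdempotentElem (isIdempotentElem_invDFT hR x) (hcomm x)
        (orderOf_pos τ).ne' (by rw [← map_pow, pow_orderOf_eq_one, map_one])
  refine ⟨B (p ^ m), hB _, ?_⟩
  rw [← hf, ← hf, hfB, hfB, ← Finset.sum_sub_distrib,
    Finset.sum_eq_single_of_mem (p ^ m) (by simp [hN, NeZero.ne N])]
  · have : ¬ p ^ m ∣ p ^ (m - 1) := by
      rw [Nat.pow_dvd_pow_iff_le_right hp.one_lt]
      omega
    simp [this]
  · intro l _ hl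
    have : l ∣ p ^ m ↔ l ∣ p ^ (m - 1) := by
      refine ⟨fun h ↦ ?_, fun h ↦ h.trans (pow_dvd_pow _ (Nat.sub_le _ _))⟩
      obtain ⟨j, hj, rfl⟩ := (Nat.dvd_prime_pow hp).1 h
      refine pow_dvd_pow _ ?_
      have : j ≠ m := fun h ↦ hl (by rw [h])
      omega
    simp [this]

/-- If the cycle type of `σ'` is obtained from that of `σ` by replacing
`p^m` parts of size `k` with `p^(m-1)` parts of size `pk`, then
`χ σ ≡ χ σ' (mod p^m)` for every (necessarily integer-valued) character of `S_n`. -/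
theorem stmt_10 (p m k n : ℕ) (hp : p.Prime) (hm : 1 ≤ m) (hk : 1 ≤ k)
    (σ σ' : Equiv.Perm (Fin n))
    (hle : Multiset.replicate (p ^ m) k ≤ fullCycleType σ)
    (hσ' : fullCycleType σ' =
      fullCycleType σ - Multiset.replicate (p ^ m) k + Multiset.replicate (p ^ (m - 1)) (p * k))
    (V : FDRep ℂ (Equiv.Perm (Fin n))) :
    ∃ z : ℤ, V.character σ - V.character σ' = ((p : ℂ)) ^ m * (z : ℂ) := by
  set P := fullCycleType σ - Multiset.replicate (p ^ m) k
  have hσ : fullCycleType σ = P + Multiset.replicate (p ^ m) k := (tsub_add_cancel_of_le hle).symm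
  obtain ⟨N, hN⟩ : ∃ N, N = p ^ m * k := ⟨_, rfl⟩
  have hpm : p ^ m ≠ 0 := pow_ne_zero _ hp.ne_zero
  have : NeZero N := ⟨by rw [hN]; exact mul_ne_zero hpm (by omega)⟩
  have hsum : P.sum + N = n := by
    rw [← sum_fullCycleType σ, hσ, Multiset.sum_add, Multiset.sum_replicate, hN, smul_eq_mul]
  obtain ⟨τ₀, hτ₀⟩ : ∃ τ₀ : Perm (Fin (n - N)), τ₀.cycleType = P.filter (1 < ·) := by
    refine (Equiv.Perm.exists_with_cycleType_iff _).2 ⟨?_, fun a ha ↦ (Multiset.mem_filter.1 ha).2⟩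
    rw [Fintype.card_fin]
    have := congrArg Multiset.sum (Multiset.filter_add_not (1 < ·) P)
    rw [Multiset.sum_add] at this
    omega
  let e : ZMod N ≃ {i : Fin n // (i : ℕ) < N} := Fintype.equivOfCardEq (by
    rw [ZMod.card, Fintype.card_subtype, Fin.card_filter_val_lt]
    omega)
  let e' : Fin (n - N) ≃ {i : Fin n // ¬ (i : ℕ) < N} := Fintype.equivOfCardEq (by
    rw [Fintype.card_subtype_compl, Fintype.card_subtype, Fin.card_filter_val_lt, Fintype.card_fin,
      Fintype.card_fin]
    omega)
  let X : ZMod N → Perm (Fin n) := fun a ↦ (Equiv.addLeft a).extendDomain e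
  let τ : Perm (Fin n) := τ₀.extendDomain e'
  have hdisj (g : Perm (ZMod N)) : (g.extendDomain e).Disjoint τ :=
    Equiv.Perm.disjoint_extendDomain e e' g τ₀
  have hct {a l : ℕ} (h : N = a * l) :
      (X a * τ).cycleType = (P + Multiset.replicate a l).filter (1 < ·) := by
    rw [(hdisj _).cycleType_mul, Equiv.Perm.cycleType_extendDomain,
      Equiv.Perm.cycleType_extendDomain, hτ₀, cycleType_addLeft_natCast h, Multiset.filter_add,
      add_comm]
  have hconj (u : (ZMod N)ˣ) (a : ZMod N) : IsConj (X (u * a) * τ) (X a * τ) := by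
    refine IsConj.symm (isConj_iff.2 ⟨u.mulLeft.extendDomain e, ?_⟩)
    rw [mul_inv_eq_iff_eq_mul, mul_assoc (X (u * a)), ← ((hdisj _).commute).eq, ← mul_assoc,
      ← mul_assoc]
    simp only [X]
    rw [Equiv.Perm.extendDomain_mul, Equiv.Perm.extendDomain_mul]
    congr 2
    ext1 x
    simp [mul_add]
  obtain ⟨w, hw, hdiff⟩ := isIntegral_character_sub_div hp hm ⟨k, hN⟩ V X
    (fun a b ↦ by
      simp only [X]
      rw [Equiv.Perm.extendDomain_mul]
      congr 1
      ext1 x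
      simp) τ (fun a ↦ (hdisj _).commute.symm) hconj
  rw [V.character_eq_of_isConj (g := X (p ^ m : ℕ) * τ) (h := σ)
      (Equiv.Perm.isConj_iff_cycleType_eq.2 (by
        rw [hct hN, cycleType_eq_filter_fullCycleType σ, hσ])),
    V.character_eq_of_isConj (g := X (p ^ (m - 1) : ℕ) * τ) (h := σ')
      (Equiv.Perm.isConj_iff_cycleType_eq.2 (by
        rw [hct (l := p * k), cycleType_eq_filter_fullCycleType σ', hσ']
        rw [hN, ← mul_assoc, pow_sub_one_mul (by omega)]))] at hdiff
  obtain ⟨z₁, h₁⟩ := exists_int_character_eq V σ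
  obtain ⟨z₂, h₂⟩ := exists_int_character_eq V σ'
  have hp0 : (p : ℂ) ^ m ≠ 0 := pow_ne_zero _ (Nat.cast_ne_zero.2 hp.ne_zero)
  have hwq : w = algebraMap ℚ ℂ ((z₁ - z₂ : ℚ) / (p : ℚ) ^ m) := by
    rw [h₁, h₂] at hdiff
    simp only [eq_ratCast]
    push_cast
    rw [eq_div_iff hp0, hdiff, mul_comm]
  rw [hwq, isIntegral_algebraMap_iff (algebraMap ℚ ℂ).injective] at hw
  obtain ⟨z, hz⟩ := IsIntegrallyClosed.isIntegral_iff.1 hw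
  refine ⟨z, ?_⟩
  rw [hdiff, hwq, ← hz]
  simp
end

section
/- Let p be prime, k, m ≥ 1, ξ a partition of n − k·p^m, and set μ = ξ ∪ (k repeated p^m times) and ν = ξ ∪ (pk repeated p^(m−1) times), both partitions of n. With λ = (n − pk, k, k, …, k) (p copies of k) a partition of n, the number of row decompositions of λ by μ is congruent to (the number of row decompositions of λ by ν) minus p^m, modulo p^(m+1). -/
/-- The number of row decompositions of `lam` by `mu`: functions from the parts of `mu`
to the parts of `lam` such that the parts mapped to a given part of `lam` of size `k`
have total size `k`. -/
noncomputable def rdCount (lam mu : Multiset ℕ) : ℕ :=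
  Nat.card {f : Fin mu.toList.length → Fin lam.toList.length //
    ∀ j : Fin lam.toList.length,
      (∑ i ∈ Finset.univ.filter (fun i => f i = j), mu.toList.get i) = lam.toList.get j}

/-- The number of ways to choose a family of disjoint subsets of `ι`, indexed by `J`, each of
total weight `k`; the value `none` marks the unused elements. -/
noncomputable def packingCount {ι : Type*} [Fintype ι] (w : ι → ℕ) (k : ℕ)
    (J : Type*) [DecidableEq J] : ℕ :=
  Nat.card {f : ι → Option J // ∀ j, (∑ i, if f i = some j then w i else 0) = k}

theorem packingCount_congr {ι κ : Type*} [Fintype ι] [Fintype κ] (e : ι ≃ κ) (w : κ → ℕ)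
    (k : ℕ) (J : Type*) [DecidableEq J] :
    packingCount (fun i => w (e i)) k J = packingCount w k J := by
  refine Nat.card_congr ((Equiv.arrowCongr e (Equiv.refl _)).subtypeEquiv fun f => ?_)
  refine forall_congr' fun j => ?_
  rw [← Equiv.sum_comp e]
  simp

theorem packingCount_of_isEmpty {ι : Type*} [Fintype ι] (w : ι → ℕ) (k : ℕ)
    (J : Type*) [DecidableEq J] [IsEmpty J] : packingCount w k J = 1 := by
  unfold packingCount
  rw [Nat.card_eq_one_iff_unique]
  exact ⟨⟨fun f g => Subtype.ext (funext fun i => Subsingleton.elim _ _)⟩,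
    ⟨⟨fun _ => none, fun j => isEmptyElim j⟩⟩⟩

/-- Splitting the packings of `Option ι` by the value at `none`. -/
theorem packingCount_option_eq_sum {ι : Type*} [Fintype ι] (w : Option ι → ℕ) (k : ℕ)
    (J : Type*) [DecidableEq J] [Fintype J] :
    packingCount w k J = ∑ x : Option J, Nat.card {f : ι → Option J //
      ∀ j, (if x = some j then w none else 0) +
        (∑ i, if f i = some j then w (some i) else 0) = k} := by
  rw [← Nat.card_sigma]
  refine Nat.card_congr
    (((Equiv.piOptionEquivProd (β := fun _ : Option ι => Option J)).subtypeEquiv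
      (q := fun y => ∀ j, (if y.1 = some j then w none else 0) +
        (∑ i, if y.2 i = some j then w (some i) else 0) = k) fun f => ?_).trans
      (Equiv.subtypeProdEquivSigmaSubtype fun x (f : ι → Option J) => ∀ j,
        (if x = some j then w none else 0) +
        (∑ i, if f i = some j then w (some i) else 0) = k))
  simp only [Fintype.sum_option]
  rfl

theorem packingCount_option_of_lt {ι : Type*} [Fintype ι] (w : Option ι → ℕ) (k : ℕ)
    (J : Type*) [DecidableEq J] [Fintype J] (hw : k < w none) :
    packingCount w k J = packingCount (fun i => w (some i)) k J := by
  rw [packingCount_option_eq_sum, Fintype.sum_option, Finset.sum_eq_zero, add_zero]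
  · simp [packingCount]
  · intro j _
    rw [Nat.card_eq_zero]
    refine Or.inl ⟨fun f => ?_⟩
    have := f.2 j
    simp only [if_true] at this
    omega

theorem packingCount_option_of_eq {ι : Type*} [Fintype ι] (w : Option ι → ℕ) (k a : ℕ)
    (hw : w none = k) (hpos : ∀ i, 0 < w (some i)) :
    packingCount w k (Fin (a + 1)) = packingCount (fun i => w (some i)) k (Fin (a + 1)) +
      (a + 1) * packingCount (fun i => w (some i)) k (Fin a) := by
  rw [packingCount_option_eq_sum, Fintype.sum_option]
  congr 1
  · simp [packingCount]
  rw [Finset.sum_const_nat (m := packingCount (fun i => w (some i)) k (Fin a))]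
  · simp
  intro j _
  symm
  have key (g : ι → Option (Fin a)) (l : Fin a) (i : ι) :
      (Option.map j.succAbove (g i) = some (j.succAbove l)) ↔ g i = some l := by
    rw [← Option.map_some, (Option.map_injective j.succAbove_right_injective).eq_iff]
  refine Nat.card_congr (Equiv.ofBijective
    (fun g => ⟨fun i => (g.1 i).map j.succAbove, fun l => ?_⟩) ⟨fun g h hgh => ?_, fun f => ?_⟩)
  · obtain rfl | ⟨l, rfl⟩ := j.eq_self_or_eq_succAbove l
    · simp [hw, Fin.succAbove_ne]
    · have := g.2 l
      simp only [key, this]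
      simp [(Fin.succAbove_ne j l).symm]
  · refine Subtype.ext (funext fun i => ?_)
    have := congrFun (congrArg Subtype.val hgh) i
    exact Option.map_injective j.succAbove_right_injective this
  · obtain ⟨f, hf⟩ := f
    have hne (i : ι) : f i ≠ some j := by
      intro hi
      have h := hf j
      simp only [if_true, hw, Nat.add_eq_left, Finset.sum_eq_zero_iff] at h
      have := h i (Finset.mem_univ _)
      rw [if_pos hi] at this
      exact (hpos i).ne' this
    have hex (i : ι) : ∃ y : Option (Fin a), y.map j.succAbove = f i := by
      rcases h : f i with _ | x
      · exact ⟨none, rfl⟩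
      · obtain ⟨y, hy⟩ := Fin.exists_succAbove_eq (x := x) (y := j)
          fun hx => hne i (hx ▸ h)
        exact ⟨some y, by simp [hy]⟩
    choose g hg using hex
    refine ⟨⟨g, fun l => ?_⟩, Subtype.ext (funext hg)⟩
    have := hf (j.succAbove l)
    simp only [← hg, key] at this
    simpa [(Fin.succAbove_ne j l).symm] using this

theorem Multiset.map_univ_toList_get {β : Type*} (s : Multiset β) :
    Finset.univ.val.map s.toList.get = s := by
  rw [Fin.univ_val_map, List.ofFn_get, Multiset.coe_toList]

theorem Multiset.map_univ_option {α β : Type*} [Fintype α] (f : Option α → β) :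
    Finset.univ.val.map f = f none ::ₘ Finset.univ.val.map fun a => f (some a) := by
  simp only [univ_option, Finset.insertNone, OrderEmbedding.coe_ofMapLEIff, Finset.cons_val,
    Multiset.map_cons, Finset.map_val, Multiset.map_map]
  rfl

theorem Multiset.exists_equiv_toList_get {α β : Type*} [Fintype α] (f : α → β)
    (s : Multiset β) (h : Finset.univ.val.map f = s) :
    ∃ e : α ≃ Fin s.toList.length, ∀ a, s.toList.get (e a) = f a := by
  classical
  have hcard (b : β) : Fintype.card {a // f a = b} = Fintype.card {i // s.toList.get i = b} := by
    have hb := congrArg (Multiset.count b) (h.trans s.map_univ_toList_get.symm)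
    rw [Multiset.count_map, Multiset.count_map] at hb
    rw [Fintype.card_subtype, Fintype.card_subtype]
    simp only [eq_comm (a := b)] at hb
    exact hb
  exact ⟨Equiv.ofFiberEquiv fun b => Fintype.equivOfCardEq (hcard b), Equiv.ofFiberEquiv_map _⟩

/-- The number of packings of the parts of `s` into `a` subsets of total size `k`. -/
noncomputable def Multiset.packingCount (s : Multiset ℕ) (k a : ℕ) : ℕ :=
  _root_.packingCount s.toList.get k (Fin a)

theorem Multiset.packingCount_eq {ι : Type*} [Fintype ι] (w : ι → ℕ) (s : Multiset ℕ)
    (h : Finset.univ.val.map w = s) (k a : ℕ) :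
    s.packingCount k a = _root_.packingCount w k (Fin a) := by
  obtain ⟨e, he⟩ := Multiset.exists_equiv_toList_get w s h
  rw [Multiset.packingCount, ← packingCount_congr e]
  simp only [he]

theorem Multiset.packingCount_cons (c : ℕ) (s : Multiset ℕ) (k a : ℕ) :
    (c ::ₘ s).packingCount k a =
      _root_.packingCount (fun x : Option (Fin s.toList.length) => x.elim c s.toList.get)
        k (Fin a) := by
  refine Multiset.packingCount_eq _ _ ?_ k a
  rw [Multiset.map_univ_option]
  exact congrArg _ s.map_univ_toList_get

theorem Multiset.packingCount_cons_of_lt {c k : ℕ} (s : Multiset ℕ) (a : ℕ) (h : k < c) :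
    (c ::ₘ s).packingCount k a = s.packingCount k a := by
  rw [Multiset.packingCount_cons, packingCount_option_of_lt _ _ _ h]
  rfl

theorem Multiset.packingCount_cons_self {k : ℕ} (s : Multiset ℕ) (a : ℕ)
    (h : ∀ x ∈ s, 0 < x) :
    (k ::ₘ s).packingCount k (a + 1) =
      s.packingCount k (a + 1) + (a + 1) * s.packingCount k a := by
  rw [Multiset.packingCount_cons, packingCount_option_of_eq _ k a rfl]
  · rfl
  · exact fun i => h _ (Multiset.mem_toList.1 (List.get_mem _ _))

theorem Multiset.packingCount_zero (s : Multiset ℕ) (k : ℕ) : s.packingCount k 0 = 1 :=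
  packingCount_of_isEmpty _ _ _

theorem Multiset.packingCount_add_replicate_of_lt {c k : ℕ} (s : Multiset ℕ) (q a : ℕ)
    (h : k < c) : (s + Multiset.replicate q c).packingCount k a = s.packingCount k a := by
  induction q with
  | zero => simp
  | succ q ih =>
    rw [Multiset.replicate_succ, Multiset.add_cons, Multiset.packingCount_cons_of_lt _ _ h, ih]

theorem Multiset.packingCount_add_replicate {k : ℕ} (hk : 0 < k) (s : Multiset ℕ)
    (h : ∀ x ∈ s, 0 < x) (q a : ℕ) :
    (s + Multiset.replicate q k).packingCount k a =
      ∑ j ∈ Finset.range (a + 1), q.choose j * a.descFactorial j * s.packingCount k (a - j) := by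
  induction q generalizing a with
  | zero => simp [Finset.sum_range_succ']
  | succ q ih =>
    rw [Multiset.replicate_succ, Multiset.add_cons]
    cases a with
    | zero => simp [Multiset.packingCount_zero]
    | succ a =>
      rw [Multiset.packingCount_cons_self, ih, ih, Finset.sum_range_succ' _ (a + 1),
        Finset.sum_range_succ' _ (a + 1), Finset.mul_sum, add_right_comm,
        ← Finset.sum_add_distrib]
      · simp only [Nat.choose_zero_right]
        congr 1
        refine Finset.sum_congr rfl fun j _ => ?_
        rw [Nat.choose_succ_succ, Nat.succ_descFactorial_succ, Nat.add_sub_add_right]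
        ring
      · intro x hx
        rcases Multiset.mem_add.1 hx with hx | hx
        · exact h x hx
        · rw [Multiset.eq_of_mem_replicate hx]; exact hk

theorem rdCount_cons_replicate (c k a : ℕ) (s : Multiset ℕ) (h : s.sum = c + a * k) :
    rdCount (c ::ₘ Multiset.replicate a k) s = s.packingCount k a := by
  obtain ⟨e, he⟩ := Multiset.exists_equiv_toList_get
    (fun x : Option (Fin a) => x.elim c fun _ => k) (c ::ₘ Multiset.replicate a k)
    (by simp [Multiset.map_univ_option, Multiset.map_const', -Fin.univ_val_map])
  symm
  refine Nat.card_congr ((Equiv.arrowCongr (Equiv.refl _) e).subtypeEquiv fun f => ?_)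
  have hsum : (∑ i, if f i = none then s.toList.get i else 0) +
      ∑ j, ∑ i, (if f i = some j then s.toList.get i else 0) = c + a * k := by
    rw [← Fintype.sum_option (fun x => ∑ i, if f i = x then s.toList.get i else 0),
      Finset.sum_comm]
    simp only [Finset.sum_ite_eq, Finset.mem_univ, if_true]
    rw [← h, ← List.sum_ofFn, List.ofFn_get, Multiset.sum_toList]
  rw [← e.forall_congr_right]
  simp only [he, Equiv.arrowCongr_apply, Finset.sum_filter, Function.comp_apply,
    Equiv.refl_symm, Equiv.refl_apply, e.apply_eq_iff_eq, Option.forall, Option.elim_none,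
    Option.elim_some]
  refine ⟨fun hf => ⟨?_, hf⟩, fun hf => hf.2⟩
  simp only [hf] at hsum
  simpa using hsum

/-- `q (q - 1) ⋯ (q - p + 1) ≡ -q` modulo `p q` when `p ∣ q`. -/
theorem Nat.Prime.mul_dvd_descFactorial_add {p q : ℕ} (hp : p.Prime) (hq : p ∣ q) (hq0 : 0 < q) :
    p * q ∣ q.descFactorial p + q := by
  obtain ⟨r, rfl⟩ : ∃ r, p = r + 1 := ⟨p - 1, by have := hp.pos; omega⟩
  obtain ⟨t, rfl⟩ : ∃ t, q = t + 1 := ⟨q - 1, by omega⟩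
  have := Fact.mk hp
  rw [Nat.succ_descFactorial_succ, mul_comm (r + 1), ← Nat.mul_add_one]
  refine Nat.mul_dvd_mul_left _ ?_
  have hrt : r ≤ t := by have := Nat.le_of_dvd hq0 hq; omega
  have ht : ((t + 1 : ℕ) : ZMod (r + 1)) = 0 := (ZMod.natCast_eq_zero_iff _ _).2 hq
  have hr : ((r + 1 : ℕ) : ZMod (r + 1)) = 0 := ZMod.natCast_self _
  rw [← ZMod.natCast_eq_zero_iff]
  have heq : (t.descFactorial r : ZMod (r + 1)) = (r.descFactorial r : ZMod (r + 1)) := by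
    rw [Nat.descFactorial_eq_prod_range, Nat.descFactorial_eq_prod_range]
    push_cast
    refine Finset.prod_congr rfl fun i hi => ?_
    have := Finset.mem_range.1 hi
    rw [Nat.cast_sub (by omega), Nat.cast_sub (by omega)]
    push_cast at ht hr
    linear_combination ht - hr
  have hw := ZMod.wilsons_lemma (r + 1)
  rw [Nat.add_sub_cancel] at hw
  push_cast
  rw [heq, Nat.descFactorial_self, hw]
  ring

theorem Nat.Prime.mul_dvd_choose_mul_descFactorial {p q j : ℕ} (hp : p.Prime) (hj : 0 < j)
    (hjp : j < p) : p * q ∣ q.choose j * p.descFactorial j := by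
  have : q.choose j * p.descFactorial j = p.choose j * q.descFactorial j := by
    rw [Nat.descFactorial_eq_factorial_mul_choose, Nat.descFactorial_eq_factorial_mul_choose]
    ring
  rw [this]
  refine Nat.mul_dvd_mul (hp.dvd_choose_self hj.ne' hjp) ?_
  obtain ⟨i, rfl⟩ : ∃ i, j = i + 1 := ⟨j - 1, by omega⟩
  cases q with
  | zero => simp
  | succ q => rw [Nat.succ_descFactorial_succ]; exact dvd_mul_right _ _

/-- Let `ξ` be a partition of `n - k·p^m`, and set
`μ = ξ ∪ (k^{p^m})`, `ν = ξ ∪ ((pk)^{p^{m-1}})`, `λ = (n - pk, k^p)`.  Then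
`|RD(λ,μ)| ≡ |RD(λ,ν)| - p^m (mod p^{m+1})`. -/
theorem stmt_12 (p n k m : ℕ) (hp : p.Prime) (hk : 1 ≤ k) (hm : 1 ≤ m)
    (hn : k * p ^ m ≤ n) (hpk : p * k ≤ n)
    (ξ : Multiset ℕ) (hξpos : ∀ a ∈ ξ, 0 < a) (hξ : ξ.sum = n - k * p ^ m) :
    ((p : ℤ)) ^ (m + 1) ∣
      (rdCount ((n - p * k) ::ₘ Multiset.replicate p k) (ξ + Multiset.replicate (p ^ m) k) : ℤ) -
      ((rdCount ((n - p * k) ::ₘ Multiset.replicate p k)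
          (ξ + Multiset.replicate (p ^ (m - 1)) (p * k)) : ℤ) - (p : ℤ) ^ m) := by
  have hlt : k < p * k := by nlinarith [hp.two_le]
  have hq : p ^ (m - 1) * (p * k) = k * p ^ m := by
    obtain ⟨r, rfl⟩ : ∃ r, m = r + 1 := ⟨m - 1, by omega⟩
    rw [Nat.add_sub_cancel]; ring
  have hdvd : p ∣ p ^ m := dvd_pow_self p (by omega)
  have hmid : p * p ^ m ∣ ∑ j ∈ Finset.Ico 1 p,
      (p ^ m).choose j * p.descFactorial j * ξ.packingCount k (p - j) :=
    Finset.dvd_sum fun j hj => Dvd.dvd.mul_right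
      (hp.mul_dvd_choose_mul_descFactorial (Finset.mem_Ico.1 hj).1 (Finset.mem_Ico.1 hj).2) _
  have hlast := hp.mul_dvd_descFactorial_add hdvd (pow_pos hp.pos m)
  have hsplit : (ξ + Multiset.replicate (p ^ m) k).packingCount k p + p ^ m =
      ξ.packingCount k p + (∑ j ∈ Finset.Ico 1 p,
      (p ^ m).choose j * p.descFactorial j * ξ.packingCount k (p - j) +
      ((p ^ m).descFactorial p + p ^ m)) := by
    rw [Multiset.packingCount_add_replicate hk _ hξpos, Finset.sum_range_succ,
      Finset.range_eq_Ico, Finset.sum_eq_sum_Ico_succ_bot hp.pos, Nat.sub_self,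
      Multiset.packingCount_zero, Nat.descFactorial_self,
      Nat.descFactorial_eq_factorial_mul_choose (p ^ m)]
    simp only [Nat.choose_zero_right, Nat.descFactorial_zero, Nat.sub_zero, zero_add]
    ring
  rw [rdCount_cons_replicate, rdCount_cons_replicate,
    Multiset.packingCount_add_replicate_of_lt _ _ _ hlt]
  · obtain ⟨c, hc⟩ := dvd_add hmid hlast
    rw [hc] at hsplit
    refine ⟨c, ?_⟩
    have := congrArg (Nat.cast : ℕ → ℤ) hsplit
    push_cast at this
    linear_combination this
  · rw [Multiset.sum_add, Multiset.sum_replicate, hξ, smul_eq_mul, hq]; omega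
  · rw [Multiset.sum_add, Multiset.sum_replicate, hξ, smul_eq_mul, mul_comm (p ^ m)]; omega
end

section
/- Let p be a prime, m ≥ 2, and suppose σ, σ' ∈ S_n have cycle types μ = (ξ, k^i, η) and ν = (ξ, k^j, τ), where ξ is common to both and has only parts of size < k, and η and τ contain only parts of size > k, with i ≢ j (mod p^m) but i ≡ j (mod p^(m−1)). Then there exists a character χ of S_n with χ(σ) ≢ χ(σ') (mod p^m); concretely, for λ = (n − pk, k^p), the permutation character M^λ = Ind_{S_λ}^{S_n} 1 satisfies M^λ(σ) ≢ M^λ(σ') (mod p^m). -/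
open Equiv

/-- The Young subgroup attached to a coloring `c : Fin n → ℕ`: the permutations
preserving each fiber of `c`. -/
def youngSubgroup {n : ℕ} (c : Fin n → ℕ) : Subgroup (Equiv.Perm (Fin n)) where
  carrier := {σ | ∀ i, c (σ i) = c i}
  one_mem' := fun _ => rfl
  mul_mem' := by
    intro a b ha hb i
    simpa [Equiv.Perm.mul_apply, hb i] using ha (b i)
  inv_mem' := by
    intro a ha i
    simpa using (ha (a⁻¹ i)).symm

/-- The value at `x` of the character of `S_n` induced from the trivial character of
the Young subgroup of the coloring `c` (the division is exact). -/
noncomputable def indYoungVal {n : ℕ} (c : Fin n → ℕ) (x : Equiv.Perm (Fin n)) : ℕ :=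
  Nat.card {k : Equiv.Perm (Fin n) // k * x * k⁻¹ ∈ youngSubgroup c} /
    Nat.card (youngSubgroup c)

open Polynomial in
theorem descPochhammer_zmod_eq (p : ℕ) [Fact p.Prime] :
    descPochhammer (ZMod p) p = X ^ p - X := by
  have hp : 1 < p := (Fact.out : p.Prime).one_lt
  have hdeg : (X ^ p - X : (ZMod p)[X]).natDegree = p :=
    FiniteField.X_pow_card_sub_X_natDegree_eq _ hp
  have hmon : (X ^ p - X : (ZMod p)[X]).Monic := by
    apply monic_X_pow_sub
    simpa using hp
  rw [← sub_eq_zero]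
  refine Polynomial.eq_zero_of_natDegree_lt_card_of_eval_eq_zero _
    (ι := ZMod p) (f := id) Function.injective_id ?_ ?_
  · intro x
    have hx : (descPochhammer (ZMod p) p).eval x = 0 := by
      rw [descPochhammer_eval_eq_prod_range]
      refine Finset.prod_eq_zero (i := x.val) (Finset.mem_range.2 x.val_lt) ?_
      simp
    simp [hx]
  · rw [ZMod.card]
    have := Polynomial.degree_sub_lt_left (p := descPochhammer (ZMod p) p) (q := X ^ p - X) ?_ ?_ ?_
    · by_cases h0 : descPochhammer (ZMod p) p - (X ^ p - X) = 0
      · rw [h0]; simp; omega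
      · rw [Polynomial.degree_eq_natDegree h0,
          Polynomial.degree_eq_natDegree (monic_descPochhammer _ _).ne_zero,
          descPochhammer_natDegree] at this
        exact_mod_cast this
    · rw [Polynomial.degree_eq_natDegree (monic_descPochhammer _ _).ne_zero,
        Polynomial.degree_eq_natDegree hmon.ne_zero, hdeg, descPochhammer_natDegree]
    · exact (monic_descPochhammer _ _).ne_zero
    · rw [(monic_descPochhammer _ _).leadingCoeff, hmon.leadingCoeff]

theorem not_dvd_descFactorial_sub {p m i j : ℕ} (hp : p.Prime) (hm : 2 ≤ m)
    (hij1 : (p : ℤ) ^ (m - 1) ∣ (i : ℤ) - j) (hij2 : ¬ (p : ℤ) ^ m ∣ (i : ℤ) - j) :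
    ¬ (p : ℤ) ^ m ∣ (i.descFactorial p : ℤ) - (j.descFactorial p : ℤ) := by
  have : Fact p.Prime := ⟨hp⟩
  obtain ⟨e, he⟩ := Polynomial.binomExpansion (descPochhammer ℤ p) (j : ℤ) ((i : ℤ) - j)
  rw [add_sub_cancel, descPochhammer_eval_eq_descFactorial,
    descPochhammer_eval_eq_descFactorial] at he
  have hder : (p : ℤ) ∣ (descPochhammer ℤ p).derivative.eval (j : ℤ) + 1 := by
    rw [← ZMod.intCast_zmod_eq_zero_iff_dvd]
    have h1 : (((descPochhammer ℤ p).derivative.eval (j : ℤ) : ℤ) : ZMod p) =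
        (descPochhammer (ZMod p) p).derivative.eval (j : ZMod p) := by
      rw [← descPochhammer_map (Int.castRingHom (ZMod p)), Polynomial.derivative_map,
        ← Int.cast_natCast (R := ZMod p) j, Polynomial.eval_intCast_map]
      simp
    rw [Int.cast_add, h1, descPochhammer_zmod_eq]
    simp [Polynomial.derivative_X_pow]
  have hpm : (p : ℤ) ^ m = p * p ^ (m - 1) := by
    rw [← pow_succ']; congr 1; omega
  have hsq : (p : ℤ) ^ m ∣ ((i : ℤ) - j) ^ 2 := by
    refine dvd_trans ?_ (pow_dvd_pow_of_dvd hij1 2)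
    rw [← pow_mul]
    exact pow_dvd_pow _ (by omega)
  intro h
  apply hij2
  have h2 : (p : ℤ) ^ m ∣
      ((descPochhammer ℤ p).derivative.eval (j : ℤ) + 1) * ((i : ℤ) - j) :=
    hpm ▸ mul_dvd_mul hder hij1
  have h3 := dvd_sub (dvd_add h2 (hsq.mul_left e)) h
  have h4 : ((descPochhammer ℤ p).derivative.eval (j : ℤ) + 1) * ((i : ℤ) - j) +
      e * ((i : ℤ) - j) ^ 2 - ((i.descFactorial p : ℤ) - j.descFactorial p) = (i : ℤ) - j := by
    linear_combination -he
  rwa [h4] at h3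

/-- Iterates of `A ↦ (r ↦ A r + r * A (r - 1))`. -/
def pascalIterate (A : ℕ → ℕ) : ℕ → ℕ → ℕ
  | 0, r => A r
  | i + 1, r => pascalIterate A i r + r * pascalIterate A i (r - 1)

theorem pascalIterate_eq_sum (A : ℕ → ℕ) (i r : ℕ) :
    pascalIterate A i r =
      ∑ l ∈ Finset.range (r + 1), i.choose l * r.descFactorial l * A (r - l) := by
  induction i generalizing r with
  | zero => simp [pascalIterate, Finset.sum_range_succ']
  | succ i ih =>
    rw [pascalIterate, ih, ih]
    cases r with
    | zero => simp
    | succ s =>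
      rw [Finset.sum_range_succ', Finset.sum_range_succ' _ (s + 1), Nat.add_sub_cancel,
        Finset.mul_sum, add_right_comm, ← Finset.sum_add_distrib]
      congr 1
      · refine Finset.sum_congr rfl fun l _ => ?_
        rw [Nat.choose_succ_succ, Nat.succ_descFactorial_succ, Nat.add_sub_add_right]
        ring
      · simp

theorem not_dvd_pascalIterate_sub {p m i j : ℕ} (hp : p.Prime) (hm : 2 ≤ m)
    (hij1 : (p : ℤ) ^ (m - 1) ∣ (i : ℤ) - j) (hij2 : ¬ (p : ℤ) ^ m ∣ (i : ℤ) - j)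
    (A : ℕ → ℕ) (hA : A 0 = 1) :
    ¬ (p : ℤ) ^ m ∣ (pascalIterate A i p : ℤ) - (pascalIterate A j p : ℤ) := by
  have hpm : (p : ℤ) ^ m = p * p ^ (m - 1) := by
    rw [← pow_succ']; congr 1; omega
  have key : ∀ i l : ℕ, i.choose l * p.descFactorial l = p.choose l * i.descFactorial l := by
    intro i l
    rw [Nat.descFactorial_eq_factorial_mul_choose, Nat.descFactorial_eq_factorial_mul_choose]
    ring
  have hdvd : (p : ℤ) ^ m ∣ ∑ l ∈ Finset.range p,
      (p.choose l * A (p - l) : ℤ) * ((i.descFactorial l : ℤ) - j.descFactorial l) := by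
    refine Finset.dvd_sum fun l hl => ?_
    rw [Finset.mem_range] at hl
    rcases Nat.eq_zero_or_pos l with rfl | hl0
    · simp
    · rw [hpm]
      refine mul_dvd_mul (Dvd.dvd.mul_right ?_ _) ?_
      · exact_mod_cast hp.dvd_choose_self hl0.ne' hl
      · rw [← descPochhammer_eval_eq_descFactorial, ← descPochhammer_eval_eq_descFactorial]
        exact hij1.trans (Polynomial.sub_dvd_eval_sub _ _ _)
  have hsum : ∀ i : ℕ, (pascalIterate A i p : ℤ) =
      (∑ l ∈ Finset.range p, (p.choose l * A (p - l) : ℤ) * (i.descFactorial l : ℤ)) +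
        i.descFactorial p := by
    intro i
    rw [pascalIterate_eq_sum, Finset.sum_range_succ, key, Nat.sub_self, hA]
    push_cast
    simp only [Nat.choose_self, Nat.cast_one, one_mul, mul_one]
    congr 1
    refine Finset.sum_congr rfl fun l _ => ?_
    have := key i l
    zify at this
    rw [this]; ring
  intro h
  apply not_dvd_descFactorial_sub hp hm hij1 hij2
  rw [hsum, hsum] at h
  have h2 := dvd_sub h hdvd
  simp only [mul_sub, Finset.sum_sub_distrib] at h2
  rwa [add_sub_add_comm, add_sub_cancel_left] at h2

/-- The generating polynomial `∏ (1 + ∑ v, X v ^ a)` over the parts `a` of `s`. -/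
noncomputable def partsPoly (p : ℕ) (s : Multiset ℕ) : MvPolynomial (Fin p) ℕ :=
  (s.map fun a => 1 + MvPolynomial.psum (Fin p) ℕ a).prod

theorem partsPoly_cons (p a : ℕ) (s : Multiset ℕ) :
    partsPoly p (a ::ₘ s) = partsPoly p s * (1 + MvPolynomial.psum (Fin p) ℕ a) := by
  simp [partsPoly, mul_comm]

theorem rename_partsPoly (p : ℕ) (s : Multiset ℕ) (e : Perm (Fin p)) :
    MvPolynomial.rename e (partsPoly p s) = partsPoly p s := by
  rw [partsPoly, map_multiset_prod, Multiset.map_map]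
  congr 2
  funext a
  simp [MvPolynomial.rename_psum]

/-- The exponent equal to `k` on `S` and `0` elsewhere. -/
noncomputable def constExponent {p : ℕ} (k : ℕ) (S : Finset (Fin p)) : Fin p →₀ ℕ :=
  ∑ v ∈ S, Finsupp.single v k

theorem constExponent_apply {p : ℕ} (k : ℕ) (S : Finset (Fin p)) (v : Fin p) :
    constExponent k S v = if v ∈ S then k else 0 := by
  simp [constExponent, Finsupp.finsetSum_apply, Finsupp.single_apply]

theorem exists_coeff_partsPoly_eq_card (p k : ℕ) (s : Multiset ℕ) :
    ∃ A : ℕ → ℕ, ∀ S : Finset (Fin p), (partsPoly p s).coeff (constExponent k S) = A S.card := by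
  have h : Function.FactorsThrough
      (fun S : Finset (Fin p) => (partsPoly p s).coeff (constExponent k S)) Finset.card := by
    intro S T hST
    obtain ⟨e, he⟩ : ∃ e : Perm (Fin p), S.map e.toEmbedding = T := by
      refine ⟨(Finset.equivOfCardEq hST).extendSubtype, Finset.eq_of_subset_of_card_le ?_ ?_⟩
      · intro v hv
        obtain ⟨w, hw, rfl⟩ := Finset.mem_map.1 hv
        exact (Finset.equivOfCardEq hST).extendSubtype_mem w hw
      · rw [Finset.card_map, hST]
    have : (constExponent k S).mapDomain e = constExponent k T := by
      subst he
      simp [constExponent, Finsupp.mapDomain_finsetSum, Finsupp.mapDomain_single]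
    dsimp only
    rw [← this]
    conv_rhs => rw [← rename_partsPoly p s e]
    rw [MvPolynomial.coeff_rename_mapDomain _ e.injective]
  obtain ⟨A, hA⟩ := (Function.factorsThrough_iff _).1 h
  exact ⟨A, fun S => congrFun hA S⟩

theorem coeff_mul_psum {p : ℕ} (Q : MvPolynomial (Fin p) ℕ) (a : ℕ) (t : Fin p →₀ ℕ) :
    (Q * MvPolynomial.psum (Fin p) ℕ a).coeff t =
      ∑ v, if a ≤ t v then Q.coeff (t - Finsupp.single v a) else 0 := by
  simp only [MvPolynomial.psum, Finset.mul_sum, MvPolynomial.coeff_sum,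
    MvPolynomial.X_pow_eq_monomial, MvPolynomial.coeff_mul_monomial', mul_one,
    Finsupp.single_le_iff]

theorem coeff_partsPoly_add_of_lt {p k : ℕ} (s η : Multiset ℕ) (hη : ∀ a ∈ η, k < a)
    (S : Finset (Fin p)) :
    (partsPoly p (s + η)).coeff (constExponent k S) =
      (partsPoly p s).coeff (constExponent k S) := by
  induction η using Multiset.induction_on with
  | empty => simp
  | cons a η ih =>
    have ha : k < a := hη a (Multiset.mem_cons_self _ _)
    rw [Multiset.add_cons, partsPoly_cons, mul_add, mul_one, MvPolynomial.coeff_add,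
      ih fun b hb => hη b (Multiset.mem_cons_of_mem hb), coeff_mul_psum,
      Finset.sum_eq_zero, add_zero]
    intro v _
    rw [if_neg]
    rw [constExponent_apply]
    split_ifs <;> omega

theorem exists_coeff_partsPoly_eq_pascalIterate (p k : ℕ) (hk : 1 ≤ k) (ξ : Multiset ℕ)
    (hξ : ∀ a ∈ ξ, 1 ≤ a) :
    ∃ A : ℕ → ℕ, A 0 = 1 ∧ ∀ (i : ℕ) (S : Finset (Fin p)),
      (partsPoly p (ξ + Multiset.replicate i k)).coeff (constExponent k S) =
        pascalIterate A i S.card := by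
  obtain ⟨A, hA⟩ := exists_coeff_partsPoly_eq_card p k ξ
  refine ⟨A, ?_, fun i => ?_⟩
  · rw [← Finset.card_empty (α := Fin p), ← hA, constExponent, Finset.sum_empty,
      ← MvPolynomial.constantCoeff_eq, partsPoly, map_multiset_prod, Multiset.map_map]
    apply Multiset.prod_eq_one
    simp only [Multiset.mem_map]
    rintro x ⟨a, ha, rfl⟩
    have := hξ a ha
    simp [MvPolynomial.psum, show a ≠ 0 by omega]
  · induction i with
    | zero => simpa [pascalIterate] using hA
    | succ i ih =>
      intro S
      rw [Multiset.replicate_succ, Multiset.add_cons, partsPoly_cons, mul_add, mul_one,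
        MvPolynomial.coeff_add, ih, coeff_mul_psum, pascalIterate]
      congr 1
      have : ∀ v, (if k ≤ constExponent k S v then
          (partsPoly p (ξ + Multiset.replicate i k)).coeff
            (constExponent k S - Finsupp.single v k) else 0) =
          if v ∈ S then pascalIterate A i (S.card - 1) else 0 := by
        intro v
        rw [constExponent_apply]
        by_cases hv : v ∈ S
        · have : constExponent k S - Finsupp.single v k = constExponent k (S.erase v) := by
            rw [constExponent, ← Finset.sum_erase_add _ _ hv, add_tsub_cancel_right]
            rfl
          simp [hv, this, ih, Finset.card_erase_of_mem hv]
        · simp [hv]; omega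
      simp [this]

theorem exists_perm_comp_eq {α C : Type*} [Fintype α] [DecidableEq C] (f g : α → C)
    (h : ∀ v, (Finset.univ.filter fun x => f x = v).card =
      (Finset.univ.filter fun x => g x = v).card) :
    ∃ π : Perm α, f ∘ π = g := by
  have e : ∀ v, {x // g x = v} ≃ {x // f x = v} := fun v =>
    Fintype.equivOfCardEq (by rw [Fintype.card_subtype, Fintype.card_subtype, h v])
  exact ⟨(sigmaFiberEquiv g).symm.trans ((sigmaCongrRight e).trans (sigmaFiberEquiv f)),
    funext fun x => (e (g x) ⟨x, rfl⟩).2⟩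

theorem indYoungVal_comp_eq_card {n : ℕ} {C : Type*} [Fintype C] [DecidableEq C]
    (c : Fin n → C) (enc : C → ℕ) (henc : Function.Injective enc) (x : Perm (Fin n)) :
    indYoungVal (enc ∘ c) x =
      (Finset.univ.filter fun f : Fin n → C => (∃ π : Perm (Fin n), c ∘ π = f) ∧
        ∀ a, f (x a) = f a).card := by
  classical
  rw [indYoungVal]
  apply Nat.div_eq_of_eq_mul_left Nat.card_pos
  have hmem : ∀ k : Perm (Fin n), k * x * k⁻¹ ∈ youngSubgroup (enc ∘ c) ↔
      ∀ a, (c ∘ k) (x a) = (c ∘ k) a := by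
    intro k
    change (∀ i, enc (c ((k * x * k⁻¹) i)) = enc (c i)) ↔ _
    constructor
    · intro h a
      simpa using henc (h (k a))
    · intro h i
      simpa using congrArg enc (h (k⁻¹ i))
  rw [Nat.card_eq_fintype_card, Nat.card_eq_fintype_card, Fintype.card_subtype]
  have hmaps : ∀ k ∈ Finset.univ.filter
      fun k : Perm (Fin n) => k * x * k⁻¹ ∈ youngSubgroup (enc ∘ c),
      c ∘ k ∈ Finset.univ.filter fun f : Fin n → C => (∃ π : Perm (Fin n), c ∘ π = f) ∧
        ∀ a, f (x a) = f a := by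
    intro k hk
    simp only [Finset.mem_filter, Finset.mem_univ, true_and] at hk ⊢
    exact ⟨⟨k, rfl⟩, (hmem k).1 hk⟩
  rw [Finset.card_eq_sum_card_fiberwise hmaps, Finset.sum_const_nat]
  intro f hf
  simp only [Finset.mem_filter, Finset.mem_univ, true_and] at hf
  obtain ⟨⟨π, rfl⟩, hf⟩ := hf
  rw [← Fintype.card_coe]
  refine Fintype.card_congr
    { toFun := fun k => ⟨k.1 * π⁻¹, ?_⟩
      invFun := fun y => ⟨y.1 * π, ?_⟩
      left_inv := fun k => by simp
      right_inv := fun y => by simp }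
  · have hk := (Finset.mem_filter.1 k.2).2
    intro i
    simpa using congrArg enc (congrFun hk (π⁻¹ i))
  · have hy : c ∘ (y.1 * π) = c ∘ π := by
      funext a
      exact henc (y.2 (π a))
    simp only [Finset.mem_filter, Finset.mem_univ, true_and]
    refine ⟨(hmem _).2 ?_, hy⟩
    have hy' : c ∘ ⇑(y.1 * π) = c ∘ π := hy
    rw [hy']
    exact hf

theorem map_card_orbit_eq_fullCycleType {n : ℕ} (σ : Perm (Fin n))
    [Fintype (Quotient (Perm.SameCycle.setoid σ))]
    [DecidableEq (Quotient (Perm.SameCycle.setoid σ))] :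
    (Finset.univ.val.map fun ω : Quotient (Perm.SameCycle.setoid σ) =>
      (Finset.univ.filter fun x : Fin n => (⟦x⟧ : Quotient (Perm.SameCycle.setoid σ)) = ω).card) =
    fullCycleType σ := by
  set w : Quotient (Perm.SameCycle.setoid σ) → ℕ := fun ω =>
    (Finset.univ.filter fun x : Fin n => (⟦x⟧ : Quotient (Perm.SameCycle.setoid σ)) = ω).card
    with hw
  have hrel : ∀ x y : Fin n, (⟦x⟧ : Quotient (Perm.SameCycle.setoid σ)) = ⟦y⟧ ↔
    σ.SameCycle x y := fun x y => Quotient.eq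
  have hfix : ∀ x : Fin n, σ x = x → w ⟦x⟧ = 1 := by
    intro x hx
    rw [hw, Finset.card_eq_one]
    refine ⟨x, ?_⟩
    ext y
    simp only [Finset.mem_filter, Finset.mem_univ, true_and, Finset.mem_singleton, hrel]
    constructor
    · intro h
      exact h.symm.eq_of_left hx |>.symm
    · rintro rfl; exact Perm.SameCycle.refl _ _
  have hmov : ∀ x : Fin n, σ x ≠ x → w ⟦x⟧ = (σ.cycleOf x).support.card := by
    intro x hx
    refine congrArg Finset.card (Finset.ext fun y => ?_)
    simp only [Finset.mem_filter, Finset.mem_univ, true_and, hrel,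
      Perm.mem_support_cycleOf_iff' hx]
    exact Perm.sameCycle_comm
  have hmov1 : ∀ x : Fin n, σ x ≠ x → w ⟦x⟧ ≠ 1 := by
    intro x hx
    rw [hmov x hx]
    have := ((Perm.isCycle_cycleOf_iff σ).2 hx).two_le_card_support
    omega
  have hnontriv : (Finset.univ.val.map w).filter (· ≠ 1) = σ.cycleType := by
    rw [Multiset.filter_map, Perm.cycleType_def]
    rw [← Finset.filter_val]
    have hout : ∀ ω ∈ Finset.univ.filter ((· ≠ 1) ∘ w), σ ω.out ≠ ω.out := by
      intro ω hω hfx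
      have := hfix _ hfx
      rw [Quotient.out_eq] at this
      exact (Finset.mem_filter.1 hω).2 this
    refine Multiset.map_eq_map_of_bij_of_nodup _ _ (Finset.nodup _) (Finset.nodup _)
      (fun ω _ => σ.cycleOf ω.out) ?_ ?_ ?_ ?_
    · intro ω hω
      rw [Finset.mem_val]
      exact Perm.cycleOf_mem_cycleFactorsFinset_iff.2 (Perm.mem_support.2 (hout ω hω))
    · intro ω hω ω' hω' h
      rw [← ω.out_eq, ← ω'.out_eq, hrel, ← Perm.mem_support_cycleOf_iff' (hout ω hω), h,
        Perm.mem_support_cycleOf_iff' (hout ω' hω')]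
    · intro c hc
      rw [Finset.mem_val] at hc
      obtain ⟨x, hx⟩ := (Perm.mem_cycleFactorsFinset_iff.1 hc).1.nonempty_support
      have hcx := Perm.cycle_is_cycleOf hx hc
      have hσx : σ x ≠ x := Perm.mem_support.1 (Perm.mem_cycleFactorsFinset_support_le hc hx)
      refine ⟨⟦x⟧, ?_, ?_⟩
      · exact Finset.mem_filter.2 ⟨Finset.mem_univ _, hmov1 x hσx⟩
      · rw [hcx]
        exact ((hrel _ _).1 (Quotient.out_eq _)).cycleOf_eq
    · intro ω hω
      have := hmov _ (hout ω hω)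
      rwa [Quotient.out_eq] at this
  have hsum : (Finset.univ.val.map w).sum = n := by
    have := Finset.card_eq_sum_card_fiberwise (s := Finset.univ) (t := Finset.univ)
      (f := fun x : Fin n => (⟦x⟧ : Quotient (Perm.SameCycle.setoid σ))) (by simp)
    simpa using this.symm
  have hsplit := Multiset.filter_add_not (· ≠ 1) (Finset.univ.val.map w)
  have hone : (Finset.univ.val.map w).filter (fun a => ¬ a ≠ 1) = Multiset.replicate
      (Multiset.card ((Finset.univ.val.map w).filter (fun a => ¬ a ≠ 1))) 1 :=
    Multiset.eq_replicate_card.2 fun a ha => by simpa using (Multiset.mem_filter.1 ha).2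
  rw [hnontriv, hone] at hsplit
  rw [← hsplit, Multiset.sum_add, Multiset.sum_replicate] at hsum
  rw [← hsplit, fullCycleType]
  congr 2
  simp only [smul_eq_mul, mul_one] at hsum
  omega

theorem coeff_prod_eq_card {p : ℕ} {Ω : Type*} [Fintype Ω] [DecidableEq Ω]
    (w : Ω → ℕ) (t : Fin p →₀ ℕ) :
    (partsPoly p (Finset.univ.val.map w)).coeff t =
      (Finset.univ.filter fun g : Ω → Option (Fin p) =>
        ∀ v, ∑ ω with g ω = some v, w ω = t v).card := by
  have h1 : partsPoly p (Finset.univ.val.map w) = ∏ ω, ∑ o : Option (Fin p),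
      MvPolynomial.monomial (o.elim 0 fun v => Finsupp.single v (w ω)) 1 := by
    rw [partsPoly, Multiset.map_map]
    refine Finset.prod_congr rfl fun ω _ => ?_
    simp [MvPolynomial.psum, MvPolynomial.X_pow_eq_monomial, Fintype.sum_option]
  rw [h1, Finset.prod_univ_sum, MvPolynomial.coeff_sum, Fintype.piFinset_univ,
    Finset.card_filter]
  refine Finset.sum_congr rfl fun g _ => ?_
  rw [← MvPolynomial.monomial_sum_one, MvPolynomial.coeff_monomial]
  congr 1
  rw [Finsupp.ext_iff]
  refine propext (forall_congr' fun v => ?_)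
  rw [Finsupp.finsetSum_apply, Finset.sum_filter]
  have : ∀ ω, (((g ω).elim 0 fun v => Finsupp.single v (w ω)) : Fin p →₀ ℕ) v =
      if g ω = some v then w ω else 0 := by
    intro ω
    cases g ω <;> simp [Finsupp.single_apply]
  simp only [this]

theorem indYoungVal_eq_coeff {n p k : ℕ} (c : Fin n → ℕ)
    (hcle : ∀ x, c x ≤ p)
    (hc0 : (Finset.univ.filter (fun x => c x = 0)).card = n - p * k)
    (hcv : ∀ v : ℕ, 1 ≤ v → v ≤ p → (Finset.univ.filter (fun x => c x = v)).card = k)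
    (σ : Perm (Fin n)) :
    indYoungVal c σ = (partsPoly p (fullCycleType σ)).coeff (constExponent k Finset.univ) := by
  classical
  let enc : Option (Fin p) → ℕ := fun o => o.elim 0 fun v => v + 1
  have henc : Function.Injective enc := by
    rintro (_ | v) (_ | v') h <;> simp [enc, Fin.ext_iff] at h ⊢
    exact h
  obtain ⟨c', rfl⟩ : ∃ c' : Fin n → Option (Fin p), c = enc ∘ c' := by
    have : ∀ x, ∃ o, enc o = c x := by
      intro x
      have := hcle x
      rcases Nat.eq_zero_or_pos (c x) with h | h
      · exact ⟨none, h.symm⟩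
      · refine ⟨some ⟨c x - 1, by omega⟩, ?_⟩
        simp [enc]; omega
    choose c' hc' using this
    exact ⟨c', funext fun x => (hc' x).symm⟩
  have hcard : ∀ v, (Finset.univ.filter fun x => c' x = some v).card = k := by
    intro v
    rw [← hcv (v + 1) (by omega) (by omega)]
    congr 1
    ext x
    simp only [Finset.mem_filter, Finset.mem_univ, true_and]
    exact henc.eq_iff (b := some v) |>.symm
  rw [indYoungVal_comp_eq_card c' enc henc, ← map_card_orbit_eq_fullCycleType,
    coeff_prod_eq_card]
  have htot : ∀ f : Fin n → Option (Fin p), n = (Finset.univ.filter fun x => f x = none).card +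
      ∑ v, (Finset.univ.filter fun x => f x = some v).card := by
    intro f
    have := Finset.card_eq_sum_card_fiberwise (s := Finset.univ) (t := Finset.univ)
      (f := f) (by simp)
    simpa [Fintype.sum_option] using this
  have hperm : ∀ f : Fin n → Option (Fin p), (∃ π : Perm (Fin n), c' ∘ π = f) ↔
      ∀ v, (Finset.univ.filter fun x => f x = some v).card = k := by
    intro f
    constructor
    · rintro ⟨π, rfl⟩ v
      rw [← hcard v]
      exact Finset.card_bij (fun x _ => π x) (by simp) (by simp)
        fun y hy => ⟨π.symm y, by simpa using hy, by simp⟩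
    · intro h
      refine exists_perm_comp_eq _ _ ?_
      rintro (_ | v)
      · have h1 := htot f
        have h2 := htot c'
        simp only [h, hcard] at h1 h2
        omega
      · rw [h, hcard]
  have hfib : ∀ (g : Quotient (Perm.SameCycle.setoid σ) → Option (Fin p)) (v : Fin p),
      (Finset.univ.filter fun x : Fin n => g ⟦x⟧ = some v).card =
      ∑ ω with g ω = some v, (Finset.univ.filter fun x : Fin n =>
        (⟦x⟧ : Quotient (Perm.SameCycle.setoid σ)) = ω).card := by
    intro g v
    rw [Finset.card_eq_sum_card_fiberwise (t := Finset.univ.filter fun ω => g ω = some v)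
      (f := fun x : Fin n => (⟦x⟧ : Quotient (Perm.SameCycle.setoid σ)))
      (fun x hx => by simpa using hx)]
    refine Finset.sum_congr rfl fun ω hω => ?_
    rw [Finset.filter_filter]
    congr 1
    ext x
    simp only [Finset.mem_filter, Finset.mem_univ, true_and] at hω ⊢
    constructor
    · exact fun h => h.2
    · rintro rfl; exact ⟨hω, rfl⟩
  symm
  refine Finset.card_bij (fun g _ => fun x => g ⟦x⟧) ?_ ?_ ?_
  · intro g hg
    simp only [Finset.mem_filter, Finset.mem_univ, true_and, constExponent_apply, if_true,
      ← hfib] at hg ⊢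
    refine ⟨(hperm _).2 hg, fun a => congrArg g ?_⟩
    exact Quotient.sound (Perm.sameCycle_apply_left.2 (Perm.SameCycle.refl _ _))
  · intro g _ g' _ h
    funext ω
    induction ω using Quotient.inductionOn with
    | h x => exact congrFun h x
  · intro f hf
    simp only [Finset.mem_filter, Finset.mem_univ, true_and] at hf
    have hinv : ∀ a b, σ.SameCycle a b → f a = f b := by
      intro a b hab
      obtain ⟨i, rfl⟩ := hab.exists_nat_pow_eq
      clear hab
      induction i with
      | zero => rfl
      | succ i ih => rw [pow_succ', Perm.mul_apply, hf.2, ih]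
    refine ⟨fun ω => Quotient.lift f hinv ω, ?_, rfl⟩
    simp only [Finset.mem_filter, Finset.mem_univ, true_and, constExponent_apply, if_true,
      ← hfib]
    exact (hperm _).1 hf.1

theorem one_le_of_mem_fullCycleType {n : ℕ} (σ : Perm (Fin n)) {a : ℕ}
    (ha : a ∈ fullCycleType σ) : 1 ≤ a := by
  rcases Multiset.mem_add.1 ha with h | h
  · exact (Perm.two_le_of_mem_cycleType h).trans' one_le_two
  · exact (Multiset.eq_of_mem_replicate h).ge

/-- Suppose `σ, σ'` have cycle types `(ξ, k^i, η)` and `(ξ, k^j, τ)` with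
`ξ` of parts `< k`, `η, τ` of parts `> k`, `i ≡ j (mod p^(m-1))` but `i ≢ j (mod p^m)`,
`m ≥ 2`.  Then for `λ = (n - pk, k^p)` (realized by a coloring `c` whose fiber over `0`
has `n - pk` elements and whose fibers over `1, …, p` have `k` elements each), the
permutation character `M^λ = Ind_{S_λ}^{S_n} 1` satisfies
`M^λ(σ) ≢ M^λ(σ') (mod p^m)`. -/
theorem stmt_19 (p n k m i j : ℕ) (hp : p.Prime) (hm : 2 ≤ m) (hk : 1 ≤ k)
    (hpk : p * k ≤ n) (σ σ' : Equiv.Perm (Fin n)) (ξ η τ : Multiset ℕ)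
    (hξ : ∀ a ∈ ξ, a < k) (hη : ∀ a ∈ η, k < a) (hτ : ∀ a ∈ τ, k < a)
    (hσ : fullCycleType σ = ξ + Multiset.replicate i k + η)
    (hσ' : fullCycleType σ' = ξ + Multiset.replicate j k + τ)
    (hij1 : (p : ℤ) ^ (m - 1) ∣ (i : ℤ) - (j : ℤ))
    (hij2 : ¬ (p : ℤ) ^ m ∣ (i : ℤ) - (j : ℤ))
    (c : Fin n → ℕ) (hcle : ∀ x, c x ≤ p)
    (hc0 : (Finset.univ.filter (fun x => c x = 0)).card = n - p * k)
    (hcv : ∀ v : ℕ, 1 ≤ v → v ≤ p → (Finset.univ.filter (fun x => c x = v)).card = k) :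
    ¬ (p : ℤ) ^ m ∣ (indYoungVal c σ : ℤ) - (indYoungVal c σ' : ℤ) := by
  have hξ1 : ∀ a ∈ ξ, 1 ≤ a := fun a ha =>
    one_le_of_mem_fullCycleType σ (by rw [hσ]; simp [ha])
  obtain ⟨A, hA0, hA⟩ := exists_coeff_partsPoly_eq_pascalIterate p k hk ξ hξ1
  rw [indYoungVal_eq_coeff c hcle hc0 hcv, indYoungVal_eq_coeff c hcle hc0 hcv, hσ, hσ',
    coeff_partsPoly_add_of_lt _ _ hη, coeff_partsPoly_add_of_lt _ _ hτ, hA, hA,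
    Finset.card_univ, Fintype.card_fin]
  exact not_dvd_pascalIterate_sub hp hm hij1 hij2 A hA0
end
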